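/- Let G be a 5-connected nonplanar apex graph such that some apex vertex v of G lies in a 5-element vertex cut of G. Then G contains a subdivision of K₅ or contains K₄⁻ as a subgraph. -/

import Mathlib

open SimpleGraph

variable {V : Type*}

/-- `K₄⁻` (two triangles sharing the edge `ab`; the edge `cd` may be absent)
occurs as a subgraph of `G`. -/
def containsK4minus (G : SimpleGraph V) : Prop :=
  ∃ a b c d : V, a ≠ b ∧ a ≠ c ∧ a ≠ d ∧ b ≠ c ∧ b ≠ d ∧ c ≠ d ∧
    G.Adj a b ∧ G.Adj a c ∧ G.Adj a d ∧ G.Adj b c ∧ G.Adj b d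

/-- `G` contains a subdivision of `K₅`: five branch vertices joined by
pairwise internally disjoint paths. -/
def containsK5Subdivision (G : SimpleGraph V) : Prop :=
  ∃ (b : Fin 5 → V) (P : ∀ i j : Fin 5, G.Walk (b i) (b j)),
    Function.Injective b ∧
    (∀ i j, i ≠ j → (P i j).IsPath) ∧
    (∀ i j, i ≠ j → ∀ k, b k ∈ (P i j).support → k = i ∨ k = j) ∧
    (∀ i j i' j', i < j → i' < j' → (i, j) ≠ (i', j') →
      ∀ x, x ∈ (P i j).support → x ∈ (P i' j').support → x = b i ∨ x = b j)

/-- `G` has an `H`-minor (branch sets are connected, disjoint, joined by edges). -/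
def HasMinor {W : Type*} (G : SimpleGraph V) (H : SimpleGraph W) : Prop :=
  ∃ f : W → Set V,
    (∀ w, (G.induce (f w)).Connected) ∧
    (∀ w₁ w₂, w₁ ≠ w₂ → Disjoint (f w₁) (f w₂)) ∧
    (∀ w₁ w₂, H.Adj w₁ w₂ → ∃ x ∈ f w₁, ∃ y ∈ f w₂, G.Adj x y)

/-- Planarity, via Wagner's theorem: no `K₅` and no `K₃,₃` minor. -/
def IsPlanar (G : SimpleGraph V) : Prop :=
  ¬ HasMinor G (completeGraph (Fin 5)) ∧
  ¬ HasMinor G (completeBipartiteGraph (Fin 3) (Fin 3))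

/-- `G` is `k`-connected: more than `k` vertices, and removing fewer than `k`
vertices leaves a connected graph. -/
def IsKConnected (k : ℕ) (G : SimpleGraph V) : Prop :=
  k < (Set.univ : Set V).ncard ∧
  ∀ S : Set V, S.Finite → S.ncard < k → (G.induce Sᶜ).Connected

/-- Boundary of a subgraph `H` of `G`: vertices of `H` incident with an edge
of `G` not in `H`. -/
def bnd (G : SimpleGraph V) (H : G.Subgraph) : Set V :=
  {v | v ∈ H.verts ∧ ∃ w, G.Adj v w ∧ ¬ H.Adj v w}

/-- A `k`-hammock: connected subgraph with boundary of size `k`. -/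
def IsHammock (G : SimpleGraph V) (k : ℕ) (H : G.Subgraph) : Prop :=
  H.Connected ∧ (bnd G H).ncard = k

def TrivialHammock (G : SimpleGraph V) (H : G.Subgraph) : Prop :=
  H.verts = bnd G H

def DegenerateHammock (G : SimpleGraph V) (H : G.Subgraph) : Prop :=
  H.verts.ncard = (bnd G H).ncard + 1

def FatHammock (G : SimpleGraph V) (H : G.Subgraph) : Prop :=
  (bnd G H).ncard + 2 ≤ H.verts.ncard

/-- A `4`-hammock is minimal if all its proper `4`-hammocks are trivial or degenerate. -/
def Minimal4Hammock (G : SimpleGraph V) (H : G.Subgraph) : Prop :=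
  IsHammock G 4 H ∧
  ∀ H' : G.Subgraph, H' ≤ H → H' ≠ H → IsHammock G 4 H' →
    TrivialHammock G H' ∨ DegenerateHammock G H'

def MinimalFat4Hammock (G : SimpleGraph V) (H : G.Subgraph) : Prop :=
  Minimal4Hammock G H ∧ FatHammock G H

/-- The list `l` records a cycle of `G` (vertices in clockwise order). -/
def IsCycleList (G : SimpleGraph V) (l : List V) : Prop :=
  l.Nodup ∧ 3 ≤ l.length ∧
    ∀ i : Fin l.length,
      G.Adj (l.get i) (l.get ⟨((i : ℕ) + 1) % l.length, Nat.mod_lt _ i.pos⟩)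

/-- `x` and `y` are consecutive on the cyclic list `C`. -/
def CycAdj (C : List V) (x y : V) : Prop :=
  ∃ i : Fin C.length,
    (C.get i = x ∧ C.get ⟨((i : ℕ) + 1) % C.length, Nat.mod_lt _ i.pos⟩ = y) ∨
    (C.get i = y ∧ C.get ⟨((i : ℕ) + 1) % C.length, Nat.mod_lt _ i.pos⟩ = x)

/-- Clockwise (forward) distance between positions on a cycle of length `n`. -/
def cycDist (n i j : ℕ) : ℕ := (j + n - i) % n

/-- The open segment of the cycle `C` from `a` clockwise to `b`. -/
def segOpen (C : List V) (a b : V) : Set V :=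
  {x | ∃ i j k : Fin C.length, C.get i = a ∧ C.get j = b ∧ C.get k = x ∧
    k ≠ i ∧ k ≠ j ∧ cycDist C.length (i : ℕ) (k : ℕ) < cycDist C.length (i : ℕ) (j : ℕ)}

/-- The closed segment of the cycle `C` from `a` clockwise to `b`. -/
def segClosed (C : List V) (a b : V) : Set V := segOpen C a b ∪ {a, b}

/-- `a 0, a 1, a 2, a 3` appear in this clockwise order along the cycle `C`. -/
def ClockwiseOn (C : List V) (a : Fin 4 → V) : Prop :=
  ∃ p : Fin 4 → Fin C.length, (∀ j, C.get (p j) = a j) ∧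
    ∀ j k : Fin 4, j < k →
      cycDist C.length ((p 0 : Fin C.length) : ℕ) ((p j : Fin C.length) : ℕ) <
        cycDist C.length ((p 0 : Fin C.length) : ℕ) ((p k : Fin C.length) : ℕ)

/-- `x` and `y` are consecutive among the points of `S` on the cycle `C`:
one of the two open arcs between them misses `S`. -/
def ConsecutiveOn (C : List V) (S : Set V) (x y : V) : Prop :=
  segOpen C x y ∩ S = ∅ ∨ segOpen C y x ∩ S = ∅

/-- A combinatorial plane graph: a graph together with its facial cycles and a
distinguished outer face; every edge lies on exactly two faces and every vertex
on exactly `deg` faces (valid for `2`-connected plane graphs). -/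
structure PlaneGraph (V : Type*) where
  graph : SimpleGraph V
  faces : Finset (List V)
  outer : List V
  outer_mem : outer ∈ faces
  faces_cycle : ∀ f ∈ faces, IsCycleList graph f
  edge_two_faces : ∀ x y, graph.Adj x y →
    {f ∈ (faces : Set (List V)) | CycAdj f x y}.ncard = 2
  vertex_faces : ∀ v : V,
    {f ∈ (faces : Set (List V)) | v ∈ f}.ncard = (graph.neighborSet v).ncard

def Cofacial (P : PlaneGraph V) (u w : V) : Prop :=
  ∃ f ∈ P.faces, u ∈ f ∧ w ∈ f

/-- `C` is the rim of the facial wheel `S_u`: the induced cycle on the vertices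
cofacial with `u`, containing `N(u)` and separating `u` from the rest of the graph. -/
def IsFacialRim (P : PlaneGraph V) (u : V) (C : List V) : Prop :=
  IsCycleList P.graph C ∧ u ∉ C ∧
  (∀ w, w ∈ C ↔ (w ≠ u ∧ Cofacial P u w)) ∧
  P.graph.neighborSet u ⊆ {x | x ∈ C} ∧
  (∀ x ∈ C, ∀ y ∈ C, P.graph.Adj x y → CycAdj C x y) ∧
  (∀ w, w ∉ C → w ≠ u → ∀ p : P.graph.Walk u w, ∃ x ∈ p.support, x ∈ C)

/-- The facial wheel `S_u` (hub `u`, spokes, and rim `C`) is a subgraph of `H`. -/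
def WheelIn (G : SimpleGraph V) (H : G.Subgraph) (u : V) (C : List V) : Prop :=
  u ∈ H.verts ∧ (∀ x ∈ C, x ∈ H.verts) ∧
  (∀ x, G.Adj u x → H.Adj u x) ∧
  (∀ x y, CycAdj C x y → H.Adj x y)

/-- A system of `k` pairwise vertex-disjoint `(A,B)`-paths inside the subgraph `H`,
internally disjoint from `A ∪ B`. -/
structure Linkage (G : SimpleGraph V) (H : G.Subgraph) (A B : Set V) (k : ℕ) where
  s : Fin k → V
  t : Fin k → V
  walk : ∀ i, G.Walk (s i) (t i)
  isPath : ∀ i, (walk i).IsPath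
  support_mem : ∀ i, ∀ x ∈ (walk i).support, x ∈ H.verts
  edges_mem : ∀ i, ∀ e ∈ (walk i).edges, e ∈ H.edgeSet
  s_mem : ∀ i, s i ∈ A
  t_mem : ∀ i, t i ∈ B
  internal : ∀ i, ∀ x ∈ (walk i).support, x ≠ s i → x ≠ t i → x ∉ A ∧ x ∉ B
  disj : ∀ i j, i ≠ j → ∀ x ∈ (walk i).support, x ∉ (walk j).support

/-- A `C_u`-linkage: a `(bnd H, C)`-4-linkage in `H`. -/
abbrev CuLinkage (G : SimpleGraph V) (H : G.Subgraph) (C : List V) :=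
  Linkage G H (bnd G H) {x | x ∈ C} 4

/-- `α(L)`: the number of endpoints of the linkage lying in `N(u)`. -/
noncomputable def lAlpha (G : SimpleGraph V) (u : V) {H : G.Subgraph} {A B : Set V} {k : ℕ}
    (L : Linkage G H A B k) : ℕ :=
  {i : Fin k | L.t i ∈ G.neighborSet u}.ncard

/-- Data of a short wheel: the four neighbours of `u` in clockwise rim order,
two edge-disjoint triangles at `u`, and the two remaining rim segments of
order between 2 and 4, not both of order 4. -/
def ShortWheelOn (G : SimpleGraph V) (u : V) (C : List V) (n : Fin 4 → V) : Prop :=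
  ClockwiseOn C n ∧ Set.range n = G.neighborSet u ∧
  G.Adj (n 0) (n 1) ∧ G.Adj (n 2) (n 3) ∧
  (segOpen C (n 1) (n 2)).ncard ≤ 2 ∧ (segOpen C (n 3) (n 0)).ncard ≤ 2 ∧
  ¬((segOpen C (n 1) (n 2)).ncard = 2 ∧ (segOpen C (n 3) (n 0)).ncard = 2)

def IsShortWheel (G : SimpleGraph V) (u : V) (C : List V) : Prop :=
  (G.neighborSet u).ncard = 4 ∧ ∃ n, ShortWheelOn G u C n

/-- A short wheel which, if imbalanced (a segment of order 4), is proper with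
respect to the boundary set `B`: the interior of that segment avoids `B`. -/
def IsShortProperWheel (G : SimpleGraph V) (u : V) (C : List V) (B : Set V) : Prop :=
  (G.neighborSet u).ncard = 4 ∧ ∃ n, ShortWheelOn G u C n ∧
    ((segOpen C (n 1) (n 2)).ncard = 2 → segOpen C (n 1) (n 2) ∩ B = ∅) ∧
    ((segOpen C (n 3) (n 0)).ncard = 2 → segOpen C (n 3) (n 0) ∩ B = ∅)



namespace ApexAux

open Classical

/-- Cut-based connectivity of the subgraph induced on a finite set. -/
def Cn {W : Type*} (H : SimpleGraph W) (U : Finset W) : Prop :=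
  U.Nonempty ∧ ∀ X : Finset W, X ⊆ U → X.Nonempty → X ≠ U →
    ∃ x ∈ X, ∃ y ∈ U, y ∉ X ∧ H.Adj x y

def Touch {W : Type*} (H : SimpleGraph W) (A B : Finset W) : Prop :=
  ∃ a ∈ A, ∃ b ∈ B, H.Adj a b

theorem Touch.symm {W : Type*} {H : SimpleGraph W} {A B : Finset W} (h : Touch H A B) :
    Touch H B A := by
  obtain ⟨a, ha, b, hb, hab⟩ := h
  exact ⟨b, hb, a, ha, hab.symm⟩

theorem Touch.mono {W : Type*} {H : SimpleGraph W} {A B A' B' : Finset W} (h : Touch H A B)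
    (hA : A ⊆ A') (hB : B ⊆ B') : Touch H A' B' := by
  obtain ⟨a, ha, b, hb, hab⟩ := h
  exact ⟨a, hA ha, b, hB hb, hab⟩

theorem Cn.singleton {W : Type*} (H : SimpleGraph W) (a : W) : Cn H {a} := by
  refine ⟨⟨a, by simp⟩, ?_⟩
  intro X hX hne hX'
  exfalso
  rcases Finset.subset_singleton_iff.1 hX with h | h
  · simp [h] at hne
  · exact hX' h

theorem Cn.union {W : Type*} {H : SimpleGraph W} {A B : Finset W} (hA : Cn H A) (hB : Cn H B)
    (h : Touch H A B) : Cn H (A ∪ B) := by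
  obtain ⟨a, ha, b, hb, hab⟩ := h
  refine ⟨⟨a, by simp [ha]⟩, ?_⟩
  intro X hX hne hX'
  by_cases h1 : (X ∩ A).Nonempty ∧ X ∩ A ≠ A
  · obtain ⟨x, hx, y, hy, hyx, hxy⟩ := hA.2 (X ∩ A) Finset.inter_subset_right h1.1 h1.2
    exact ⟨x, (Finset.mem_inter.1 hx).1, y, by simp [hy], fun h => hyx (by simp [h, hy]), hxy⟩
  by_cases h2 : (X ∩ B).Nonempty ∧ X ∩ B ≠ B
  · obtain ⟨x, hx, y, hy, hyx, hxy⟩ := hB.2 (X ∩ B) Finset.inter_subset_right h2.1 h2.2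
    exact ⟨x, (Finset.mem_inter.1 hx).1, y, by simp [hy], fun h => hyx (by simp [h, hy]), hxy⟩
  by_cases haX : a ∈ X
  · have hAX : X ∩ A = A := by
      by_contra hc
      exact h1 ⟨⟨a, by simp [ha, haX]⟩, hc⟩
    by_cases hbX : b ∈ X
    · have hBX : X ∩ B = B := by
        by_contra hc
        exact h2 ⟨⟨b, by simp [hb, hbX]⟩, hc⟩
      exfalso
      apply hX'
      apply Finset.Subset.antisymm hX
      intro z hz
      rcases Finset.mem_union.1 hz with hz | hz
      · rw [← hAX] at hz; exact (Finset.mem_inter.1 hz).1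
      · rw [← hBX] at hz; exact (Finset.mem_inter.1 hz).1
    · exact ⟨a, haX, b, by simp [hb], hbX, hab⟩
  · by_cases hbX : b ∈ X
    · exact ⟨b, hbX, a, by simp [ha], haX, hab.symm⟩
    · exfalso
      obtain ⟨x, hx⟩ := hne
      rcases Finset.mem_union.1 (hX hx) with hz | hz
      · exact h1 ⟨⟨x, by simp [hx, hz]⟩, fun hc => haX (by
          rw [← hc] at ha; exact (Finset.mem_inter.1 ha).1)⟩
      · exact h2 ⟨⟨x, by simp [hx, hz]⟩, fun hc => hbX (by
          rw [← hc] at hb; exact (Finset.mem_inter.1 hb).1)⟩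

theorem Cn.insert {W : Type*} {H : SimpleGraph W} {A : Finset W} {b a : W} (hA : Cn H A)
    (ha : a ∈ A) (hab : H.Adj a b) : Cn H (insert b A) := by
  have := hA.union (Cn.singleton H b) ⟨a, ha, b, by simp, hab⟩
  rwa [Finset.union_comm, ← Finset.insert_eq] at this

/-- Components: a maximal connected extension of `Z` inside `U`. -/
theorem exists_comp {W : Type*} {H : SimpleGraph W} {U Z : Finset W} (hZ : Cn H Z) (hZU : Z ⊆ U) :
    ∃ M : Finset W, Z ⊆ M ∧ M ⊆ U ∧ Cn H M ∧ ∀ x ∈ M, ∀ y ∈ U, H.Adj x y → y ∈ M := by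
  have hfin : (U.powerset.filter (fun M => Z ⊆ M ∧ Cn H M)).Nonempty :=
    ⟨Z, by simp [hZ, hZU]⟩
  obtain ⟨M, hM, hmax⟩ := Finset.exists_max_image _ Finset.card hfin
  simp only [Finset.mem_filter, Finset.mem_powerset] at hM hmax
  refine ⟨M, hM.2.1, hM.1, hM.2.2, ?_⟩
  intro x hx y hy hxy
  by_contra hyM
  have := hmax (insert y M) ⟨Finset.insert_subset hy hM.1,
    hM.2.1.trans (Finset.subset_insert _ _), hM.2.2.insert hx hxy⟩
  rw [Finset.card_insert_of_notMem hyM] at this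
  omega

/-- Inside a connected set `U`, extend `Z` avoiding `R` until it touches `R`. -/
theorem extend_touch {W : Type*} {H : SimpleGraph W} {U Z R : Finset W} (hU : Cn H U)
    (hZ : Cn H Z) (hZU : Z ⊆ U) (hRU : (R ∩ U).Nonempty) (hd : Disjoint Z R) :
    ∃ M : Finset W, Z ⊆ M ∧ M ⊆ U ∧ Disjoint M R ∧ Cn H M ∧ Touch H M R := by
  obtain ⟨M, h1, h2, h3, h4⟩ := exists_comp (U := U \ R) hZ (by
    intro z hz
    exact Finset.mem_sdiff.2 ⟨hZU hz, Finset.disjoint_left.1 hd hz⟩)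
  have hMU : M ⊆ U := h2.trans Finset.sdiff_subset
  refine ⟨M, h1, hMU, ?_, h3, ?_⟩
  · rw [Finset.disjoint_left]
    intro z hz
    exact (Finset.mem_sdiff.1 (h2 hz)).2
  · obtain ⟨r, hr⟩ := hRU
    have hr' := Finset.mem_inter.1 hr
    obtain ⟨x, hx, y, hy, hyM, hxy⟩ := hU.2 M hMU h3.1 (by
      intro hc
      have := hr'.2
      rw [← hc] at this
      exact (Finset.mem_sdiff.1 (h2 this)).2 hr'.1)
    refine ⟨x, hx, y, ?_, hxy⟩
    by_contra hyR
    exact hyM (h4 x hx y (Finset.mem_sdiff.2 ⟨hy, hyR⟩) hxy)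

/-- A connected connector between two disjoint nonadjacent sets. -/
theorem connector {W : Type*} {H : SimpleGraph W} {U A B : Finset W} (hU : Cn H U)
    (hA : Cn H A) (hAU : A ⊆ U) (hBU : (B ∩ U).Nonempty) (hd : Disjoint A B)
    (hn : ¬ Touch H A B) :
    ∃ Z : Finset W, Z ⊆ U ∧ Disjoint Z A ∧ Disjoint Z B ∧ Cn H Z ∧ Touch H Z A ∧ Touch H Z B := by
  obtain ⟨A', h1, h2, h3, h4, z, hz, b, hb, hzb⟩ := extend_touch hU hA hAU hBU hd
  have hzA : z ∉ A := fun h => hn ⟨z, h, b, hb, hzb⟩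
  obtain ⟨Z, g1, g2, g3, g4, g5⟩ := extend_touch h4 (Cn.singleton H z) (by simpa using hz)
    (by obtain ⟨a, ha⟩ := hA.1; exact ⟨a, by simp [ha, h1 ha]⟩) (R := A) (by simpa using hzA)
  refine ⟨Z, g2.trans h2, g3, ?_, g4, g5, ⟨z, g1 (by simp), b, hb, hzb⟩⟩
  exact Finset.disjoint_of_subset_left g2 h3

theorem Cn.connected {W : Type*} {H : SimpleGraph W} {U : Finset W} (hU : Cn H U) :
    (H.induce (U : Set W)).Connected := by
  rw [SimpleGraph.connected_iff]
  obtain ⟨u, hu⟩ := hU.1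
  refine ⟨?_, ⟨⟨u, hu⟩⟩⟩
  have key : ∀ a b : (U : Set W), (H.induce (U : Set W)).Reachable a b := by
    intro a b
    by_contra hab
    let X : Finset W := U.filter (fun x => ∃ hx : x ∈ (U : Set W),
      (H.induce (U : Set W)).Reachable a ⟨x, hx⟩)
    obtain ⟨x, hx, y, hy, hyX, hxy⟩ := hU.2 X (Finset.filter_subset _ _)
      ⟨a, by simp only [X, Finset.mem_filter]; exact ⟨a.2, a.2, Reachable.refl _⟩⟩ (by
        intro hc
        have hb : (b : W) ∈ X := by rw [hc]; exact b.2
        simp only [X, Finset.mem_filter] at hb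
        exact hab hb.2.2)
    simp only [X, Finset.mem_filter] at hx hyX
    obtain ⟨hxU, hxs, hr⟩ := hx
    apply hyX
    refine ⟨hy, hy, hr.trans ?_⟩
    apply Adj.reachable
    exact hxy
  exact key

theorem Cn.of_connected {W : Type*} {H : SimpleGraph W} {U : Finset W}
    (h : (H.induce (U : Set W)).Connected) : Cn H U := by
  obtain ⟨u⟩ := h.nonempty
  refine ⟨⟨u, u.2⟩, ?_⟩
  intro X hX hne hX'
  by_contra hc
  push Not at hc
  obtain ⟨x, hx⟩ := hne
  obtain ⟨y, hy, hyX⟩ : ∃ y ∈ U, y ∉ X := by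
    by_contra h'
    push Not at h'
    exact hX' (Finset.Subset.antisymm hX h')
  obtain ⟨w⟩ := h.preconnected ⟨x, hX hx⟩ ⟨y, hy⟩
  obtain ⟨d, _, hd1, hd2⟩ := w.exists_boundary_dart {z | (z : W) ∈ X} hx hyX
  exact hc d.fst hd1 d.snd d.snd.2 hd2 d.adj

/-- Building a `K₃,₃` minor from six finite sets. -/
theorem k33_minor {W : Type*} {H : SimpleGraph W} (A B : Fin 3 → Finset W)
    (hA : ∀ i, Cn H (A i)) (hB : ∀ i, Cn H (B i))
    (hAA : ∀ i j, i ≠ j → Disjoint (A i) (A j)) (hBB : ∀ i j, i ≠ j → Disjoint (B i) (B j))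
    (hAB : ∀ i j, Disjoint (A i) (B j)) (hT : ∀ i j, Touch H (A i) (B j)) :
    HasMinor H (completeBipartiteGraph (Fin 3) (Fin 3)) := by
  refine ⟨fun w => ((Sum.elim A B w : Finset W) : Set W), ?_, ?_, ?_⟩
  · rintro (i | i)
    · exact (hA i).connected
    · exact (hB i).connected
  · rintro (i | i) (j | j) hij
    · exact Finset.disjoint_coe.2 (hAA i j (fun h => hij (by rw [h])))
    · exact Finset.disjoint_coe.2 (hAB i j)
    · exact Finset.disjoint_coe.2 (hAB j i).symm
    · exact Finset.disjoint_coe.2 (hBB i j (fun h => hij (by rw [h])))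
  · rintro (i | i) (j | j) hij
    · simp at hij
    · exact hT i j
    · exact (hT j i).symm
    · simp at hij

theorem k5_minor {W : Type*} {H : SimpleGraph W} (A : Fin 5 → Finset W)
    (hA : ∀ i, Cn H (A i))
    (hAA : ∀ i j, i < j → Disjoint (A i) (A j)) (hT : ∀ i j, i < j → Touch H (A i) (A j)) :
    HasMinor H (completeGraph (Fin 5)) := by
  refine ⟨fun w => (A w : Set W), fun w => (hA w).connected, ?_, ?_⟩
  · intro i j hij
    rcases lt_or_gt_of_ne hij with h | h
    · exact Finset.disjoint_coe.2 (hAA i j h)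
    · exact Finset.disjoint_coe.2 (hAA j i h).symm
  · intro i j hij
    have hij : i ≠ j := hij
    rcases lt_or_gt_of_ne hij with h | h
    · exact hT i j h
    · exact (hT j i h).symm


/-- `p` is a potential for the edge labelling `f` on `U`. -/
def Pot {W : Type*} (H : SimpleGraph W) (f : Sym2 W → ZMod 2) (U : Finset W) (p : W → ZMod 2) :
    Prop :=
  ∀ x ∈ U, ∀ y ∈ U, H.Adj x y → f s(x, y) = p x + p y

def Bal {W : Type*} (H : SimpleGraph W) (f : Sym2 W → ZMod 2) (U : Finset W) : Prop :=
  ∃ p, Pot H f U p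

theorem z2_a : ∀ a b c d e : ZMod 2, a = b + c → a = d + e → b + d = c + e := by decide

theorem z2_b : ∀ a b c d : ZMod 2, a = b + c → a = (b + d) + (c + d) := by decide

theorem Pot.mono {W : Type*} {H : SimpleGraph W} {f : Sym2 W → ZMod 2} {U U' : Finset W}
    {p : W → ZMod 2} (h : Pot H f U p) (hU : U' ⊆ U) : Pot H f U' p :=
  fun x hx y hy hxy => h x (hU hx) y (hU hy) hxy

theorem Pot.shift {W : Type*} {H : SimpleGraph W} {f : Sym2 W → ZMod 2} {U : Finset W}
    {p : W → ZMod 2} (h : Pot H f U p) (c : ZMod 2) : Pot H f U (fun x => p x + c) :=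
  fun x hx y hy hxy => z2_b _ _ _ _ (h x hx y hy hxy)

/-- Two potentials on a connected set agreeing at one point agree everywhere. -/
theorem Pot.unique {W : Type*} {H : SimpleGraph W} {f : Sym2 W → ZMod 2} {U : Finset W}
    {p q : W → ZMod 2} (hp : Pot H f U p) (hq : Pot H f U q) (hU : Cn H U) {u : W} (hu : u ∈ U)
    (hpq : p u = q u) : ∀ x ∈ U, p x = q x := by
  by_contra hc
  push Not at hc
  obtain ⟨z, hz, hzn⟩ := hc
  obtain ⟨x, hx, y, hy, hyX, hxy⟩ := hU.2 (U.filter (fun x => p x = q x))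
    (Finset.filter_subset _ _) ⟨u, by simp [hu, hpq]⟩ (by
      intro hc
      have : z ∈ U.filter (fun x => p x = q x) := by rw [hc]; exact hz
      exact hzn (Finset.mem_filter.1 this).2)
  rw [Finset.mem_filter] at hx hyX
  apply hyX
  refine ⟨hy, ?_⟩
  have h1 := hp x hx.1 y hy hxy
  have h2 := hq x hx.1 y hy hxy
  rw [h1, hx.2] at h2
  exact add_left_cancel h2

/-- Gluing potentials along a vertex cover with agreement. -/
theorem Pot.glue {W : Type*} {H : SimpleGraph W} {f : Sym2 W → ZMod 2} {A B : Finset W}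
    {p q : W → ZMod 2} (hp : Pot H f A p) (hq : Pot H f B q) (hpq : ∀ x ∈ A, x ∈ B → p x = q x)
    (hn : ∀ x ∈ A, ∀ y ∈ B, H.Adj x y → x ∈ B ∨ y ∈ A) : Bal H f (A ∪ B) := by
  refine ⟨fun x => if x ∈ A then p x else q x, ?_⟩
  have hB : ∀ x ∈ B, (if x ∈ A then p x else q x) = q x := by
    intro x hx
    split_ifs with h
    · exact hpq x h hx
    · rfl
  have hA : ∀ x ∈ A, (if x ∈ A then p x else q x) = p x := fun x hx => if_pos hx
  have hcase : ∀ x ∈ A, ∀ y ∈ B, H.Adj x y → (x ∈ A ∧ y ∈ A) ∨ (x ∈ B ∧ y ∈ B) := by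
    intro x hx y hy hxy
    rcases hn x hx y hy hxy with h | h
    · exact Or.inr ⟨h, hy⟩
    · exact Or.inl ⟨hx, h⟩
  intro x hx y hy hxy
  have hc : (x ∈ A ∧ y ∈ A) ∨ (x ∈ B ∧ y ∈ B) := by
    rcases Finset.mem_union.1 hx with hx | hx <;> rcases Finset.mem_union.1 hy with hy | hy
    · exact Or.inl ⟨hx, hy⟩
    · exact hcase x hx y hy hxy
    · rcases hcase y hy x hx hxy.symm with h | h
      · exact Or.inl h.symm
      · exact Or.inr h.symm
    · exact Or.inr ⟨hx, hy⟩
  rcases hc with ⟨h1, h2⟩ | ⟨h1, h2⟩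
  · show _ = (if x ∈ A then p x else q x) + (if y ∈ A then p y else q y)
    rw [hA x h1, hA y h2]; exact hp x h1 y h2 hxy
  · show _ = (if x ∈ A then p x else q x) + (if y ∈ A then p y else q y)
    rw [hB x h1, hB y h2]; exact hq x h1 y h2 hxy

theorem z2_c : ∀ a b : ZMod 2, b = a + (a + b) := by decide

theorem Pot.normalize {W : Type*} {H : SimpleGraph W} {f : Sym2 W → ZMod 2} {U : Finset W}
    {p : W → ZMod 2} (h : Pot H f U p) (u : W) (c : ZMod 2) : ∃ q, Pot H f U q ∧ q u = c :=
  ⟨_, h.shift (p u + c), (z2_c _ _).symm⟩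

/-- Vertex-minimal unbalanced sets. -/
def MinUnbal {W : Type*} (H : SimpleGraph W) (f : Sym2 W → ZMod 2) (J : Finset W) : Prop :=
  ¬ Bal H f J ∧ ∀ a ∈ J, Bal H f (J.erase a)

theorem MinUnbal.ssub {W : Type*} {H : SimpleGraph W} {f : Sym2 W → ZMod 2} {J U : Finset W}
    (h : MinUnbal H f J) {a : W} (ha : a ∈ J) (haU : a ∉ U) (hU : U ⊆ J) : Bal H f U := by
  obtain ⟨p, hp⟩ := h.2 a ha
  exact ⟨p, hp.mono (fun x hx => Finset.mem_erase.2 ⟨fun h => haU (h ▸ hx), hU hx⟩)⟩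

theorem MinUnbal.cn {W : Type*} {H : SimpleGraph W} {f : Sym2 W → ZMod 2} {J : Finset W}
    (h : MinUnbal H f J) : Cn H J := by
  refine ⟨?_, ?_⟩
  · rw [Finset.nonempty_iff_ne_empty]
    intro hc
    exact h.1 ⟨0, by rw [hc]; intro x hx; simp at hx⟩
  · intro X hX ⟨x, hx⟩ hX'
    by_contra hc
    push Not at hc
    obtain ⟨y, hy, hyX⟩ : ∃ y ∈ J, y ∉ X := by
      by_contra h'
      push Not at h'
      exact hX' (Finset.Subset.antisymm hX h')
    obtain ⟨p, hp⟩ := h.ssub hy hyX hX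
    obtain ⟨q, hq⟩ := h.ssub (U := J \ X) (hX hx) (by simp [hx]) Finset.sdiff_subset
    have := Pot.glue hp hq (by intro z hz hz'; simp [hz] at hz') (by
      intro z hz w hw hzw
      rw [Finset.mem_sdiff] at hw
      exact absurd hzw (hc z hz w hw.1 hw.2))
    rw [Finset.union_sdiff_of_subset hX] at this
    exact h.1 this

theorem MinUnbal.cn_erase {W : Type*} {H : SimpleGraph W} {f : Sym2 W → ZMod 2} {J : Finset W}
    (h : MinUnbal H f J) {a : W} (ha : a ∈ J) : Cn H (J.erase a) := by
  refine ⟨?_, ?_⟩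
  · rw [Finset.nonempty_iff_ne_empty]
    intro hc
    apply h.1
    refine ⟨0, ?_⟩
    intro x hx y hy hxy
    exfalso
    have h1 : ∀ z ∈ J, z = a := by
      intro z hz
      by_contra hza
      have : z ∈ J.erase a := Finset.mem_erase.2 ⟨hza, hz⟩
      simp [hc] at this
    rw [h1 x hx, h1 y hy] at hxy
    exact H.loopless.irrefl _ hxy
  · intro X hX ⟨x, hx⟩ hX'
    by_contra hc
    push Not at hc
    obtain ⟨y, hy, hyX⟩ : ∃ y ∈ J.erase a, y ∉ X := by
      by_contra h'
      push Not at h'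
      exact hX' (Finset.Subset.antisymm hX h')
    have hxJ := Finset.mem_erase.1 (hX hx)
    have hyJ := Finset.mem_erase.1 hy
    have haX : a ∉ X := fun h => (Finset.mem_erase.1 (hX h)).1 rfl
    obtain ⟨p, hp⟩ := h.ssub (U := insert a X) hyJ.2 (by simp [hyX, hyJ.1])
      (Finset.insert_subset ha (hX.trans (Finset.erase_subset _ _)))
    obtain ⟨q', hq'⟩ := h.ssub (U := J \ X) hxJ.2 (by simp [hx]) Finset.sdiff_subset
    obtain ⟨q, hq, hqa⟩ := hq'.normalize a (p a)
    have := Pot.glue hp hq (by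
        intro z hz hz'
        rcases Finset.mem_insert.1 hz with rfl | hz
        · exact hqa.symm
        · simp [hz] at hz') (by
      intro z hz w hw hzw
      rw [Finset.mem_sdiff] at hw
      rcases Finset.mem_insert.1 hz with rfl | hz
      · exact Or.inl (by simp [ha, haX])
      · by_cases hwa : w = a
        · right; simp [hwa]
        · exact absurd hzw (hc z hz w (Finset.mem_erase.2 ⟨hwa, hw.1⟩) hw.2))
    have hu : insert a X ∪ J \ X = J := by
      ext z
      simp only [Finset.mem_union, Finset.mem_insert, Finset.mem_sdiff]
      constructor
      · rintro ((rfl | hz) | hz)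
        · exact ha
        · exact (Finset.mem_erase.1 (hX hz)).2
        · exact hz.1
      · intro hz
        by_cases hzX : z ∈ X
        · exact Or.inl (Or.inr hzX)
        · exact Or.inr ⟨hz, hzX⟩
    rw [hu] at this
    exact h.1 this

/-- Neighbours of `a` inside `J`. -/
noncomputable def nb {W : Type*} (H : SimpleGraph W) (J : Finset W) (a : W) : Finset W :=
  J.filter (fun y => H.Adj a y)

theorem mem_nb {W : Type*} {H : SimpleGraph W} {J : Finset W} {a y : W} :
    y ∈ nb H J a ↔ y ∈ J ∧ H.Adj a y := by simp [nb]

/-- Key step: no path from `y1` to `y0` in `J - a` avoiding `y2`, for opposite labels. -/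
theorem MinUnbal.no_conn {W : Type*} {H : SimpleGraph W} {f : Sym2 W → ZMod 2} {J : Finset W}
    (h : MinUnbal H f J) {a y0 y1 y2 : W} {p : W → ZMod 2} (ha : a ∈ J)
    (hp : Pot H f (J.erase a) p)
    (h0 : H.Adj a y0) (h1 : H.Adj a y1) (h2 : y2 ∈ J) (h2a : y2 ≠ a) (hne : f s(a, y0) + p y0 ≠ f s(a, y1) + p y1)
    {M : Finset W} (hM : Cn H M) (hMJ : M ⊆ J.erase a) (hM0 : y0 ∈ M) (hM1 : y1 ∈ M)
    (hM2 : y2 ∉ M) : False := by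
  obtain ⟨q', hq'⟩ := h.2 y2 h2
  obtain ⟨q, hq, hq0⟩ := hq'.normalize y0 (p y0)
  have hMJ2 : M ⊆ J.erase y2 := by
    intro x hx
    exact Finset.mem_erase.2 ⟨fun h => hM2 (h ▸ hx), (Finset.mem_erase.1 (hMJ hx)).2⟩
  have huni := Pot.unique (hp.mono hMJ) (hq.mono hMJ2) hM hM0 hq0.symm
  have haJ : a ∈ J.erase y2 := Finset.mem_erase.2 ⟨h2a.symm, ha⟩
  apply hne
  rw [hq a haJ y0 (hMJ2 hM0) h0, hq a haJ y1 (hMJ2 hM1) h1, huni y0 hM0, huni y1 hM1]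
  ring_nf
  have h20 : (2 : ZMod 2) = 0 := rfl
  simp [h20]

theorem z2_d : ∀ a b c : ZMod 2, a ≠ b → c = a ∨ c = b := by decide

theorem MinUnbal.exists_labels {W : Type*} {H : SimpleGraph W} {f : Sym2 W → ZMod 2} {J : Finset W}
    (h : MinUnbal H f J) {a : W} {p : W → ZMod 2} (hp : Pot H f (J.erase a) p) :
    ∃ y0 ∈ nb H J a, ∃ y1 ∈ nb H J a, f s(a, y0) + p y0 ≠ f s(a, y1) + p y1 := by
  by_contra hc
  push Not at hc
  apply h.1
  have hex : ∃ c, ∀ y ∈ nb H J a, f s(a, y) + p y = c := by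
    by_cases hne : (nb H J a).Nonempty
    · obtain ⟨y0, hy0⟩ := hne
      exact ⟨f s(a, y0) + p y0, fun y hy => hc y hy y0 hy0⟩
    · exact ⟨0, fun y hy => absurd ⟨y, hy⟩ hne⟩
  obtain ⟨c, hcc⟩ := hex
  refine ⟨fun x => if x = a then c else p x, ?_⟩
  intro x hx y hy hxy
  by_cases hxa : x = a
  · subst hxa
    have hyx : y ≠ x := hxy.ne'
    simp only [if_true, if_neg hyx]
    rw [← hcc y (mem_nb.2 ⟨hy, hxy⟩), add_assoc, CharTwo.add_self_eq_zero, add_zero]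
  · by_cases hya : y = a
    · subst hya
      simp only [if_true, if_neg hxa]
      rw [← hcc x (mem_nb.2 ⟨hx, hxy.symm⟩), Sym2.eq_swap, add_comm, add_assoc, CharTwo.add_self_eq_zero, add_zero]
    · simp only [if_neg hxa, if_neg hya]
      exact hp x (Finset.mem_erase.2 ⟨hxa, hx⟩) y (Finset.mem_erase.2 ⟨hya, hy⟩) hxy

theorem MinUnbal.no_third {W : Type*} {H : SimpleGraph W} {f : Sym2 W → ZMod 2} {J : Finset W}
    (h : MinUnbal H f J) {a y0 y1 y2 : W} {p : W → ZMod 2} (ha : a ∈ J)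
    (hp : Pot H f (J.erase a) p) (h0 : y0 ∈ nb H J a) (h1 : y1 ∈ nb H J a) (h2 : y2 ∈ nb H J a)
    (h20 : y2 ≠ y0) (hne0 : f s(a, y0) + p y0 ≠ f s(a, y1) + p y1)
    (hne2 : f s(a, y2) + p y2 ≠ f s(a, y1) + p y1) : False := by
  rw [mem_nb] at h0 h1 h2
  have e0 : y0 ∈ J.erase a := Finset.mem_erase.2 ⟨h0.2.ne', h0.1⟩
  have e1 : y1 ∈ J.erase a := Finset.mem_erase.2 ⟨h1.2.ne', h1.1⟩
  have e2 : y2 ∈ J.erase a := Finset.mem_erase.2 ⟨h2.2.ne', h2.1⟩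
  have h10 : y1 ≠ y0 := by rintro rfl; exact hne0 rfl
  have h12 : y1 ≠ y2 := by rintro rfl; exact hne2 rfl
  obtain ⟨M, hM1, hMU, hMd, hM, m, hm, b, hb, hmb⟩ := extend_touch (h.cn_erase ha)
    (Cn.singleton H y1) (by simpa using e1) (R := {y0, y2}) ⟨y0, by simp [h0.2.ne', h0.1]⟩
    (by simp [h10, h12])
  have hM1 : y1 ∈ M := hM1 (by simp)
  rw [Finset.disjoint_right] at hMd
  have hn0 : y0 ∉ M := hMd (by simp)
  have hn2 : y2 ∉ M := hMd (by simp)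
  rcases Finset.mem_insert.1 hb with rfl | hb
  · exact h.no_conn ha hp h0.2 h1.2 h2.1 h2.2.ne' hne0 (hM.insert hm hmb)
      (Finset.insert_subset e0 hMU) (by simp) (by simp [hM1]) (by simp [hn2, h20])
  · rw [Finset.mem_singleton] at hb
    subst hb
    exact h.no_conn ha hp h2.2 h1.2 h0.1 h0.2.ne' hne2 (hM.insert hm hmb)
      (Finset.insert_subset e2 hMU) (by simp) (by simp [hM1]) (by simp [hn0, h20.symm])

theorem MinUnbal.nb_eq {W : Type*} {H : SimpleGraph W} {f : Sym2 W → ZMod 2} {J : Finset W}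
    (h : MinUnbal H f J) {a : W} {p : W → ZMod 2} (ha : a ∈ J)
    (hp : Pot H f (J.erase a) p) :
    ∃ y0 y1, nb H J a = {y0, y1} ∧ y0 ≠ y1 ∧ f s(a, y0) + p y0 ≠ f s(a, y1) + p y1 := by
  obtain ⟨y0, h0, y1, h1, hne⟩ := h.exists_labels hp
  refine ⟨y0, y1, ?_, by rintro rfl; exact hne rfl, hne⟩
  ext z
  simp only [Finset.mem_insert, Finset.mem_singleton]
  constructor
  · intro hz
    by_contra hc
    push Not at hc
    rcases z2_d _ _ (f s(a, z) + p z) hne with h' | h'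
    · exact h.no_third ha hp h0 h1 hz hc.1 hne (h' ▸ hne)
    · exact h.no_third ha hp h1 h0 hz hc.2 hne.symm (h' ▸ hne.symm)
  · rintro (rfl | rfl)
    · exact h0
    · exact h1

theorem MinUnbal.card_nb {W : Type*} {H : SimpleGraph W} {f : Sym2 W → ZMod 2} {J : Finset W}
    (h : MinUnbal H f J) {a : W} (ha : a ∈ J) : (nb H J a).card = 2 := by
  obtain ⟨p, hp⟩ := h.2 a ha
  obtain ⟨y0, y1, h1, h2, _⟩ := h.nb_eq ha hp
  rw [h1, Finset.card_pair h2]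

/-- Edges of `H` inside `J`. -/
noncomputable def eJ {W : Type*} [Fintype W] (H : SimpleGraph W) (J : Finset W) :
    Finset (Sym2 W) :=
  H.edgeFinset.filter (fun e => ∀ x ∈ e, x ∈ J)

theorem mem_eJ {W : Type*} [Fintype W] {H : SimpleGraph W} {J : Finset W} {x y : W} :
    s(x, y) ∈ eJ H J ↔ H.Adj x y ∧ x ∈ J ∧ y ∈ J := by
  simp [eJ]

theorem inc_eJ {W : Type*} [Fintype W] {H : SimpleGraph W} {J : Finset W} {x : W} (hx : x ∈ J) :
    (eJ H J).filter (fun e => x ∈ e) = (nb H J x).image (fun y => s(x, y)) := by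
  ext e
  induction e using Sym2.ind with
  | _ u w =>
    simp only [Finset.mem_filter, Finset.mem_image, mem_nb, mem_eJ, Sym2.mem_iff]
    constructor
    · rintro ⟨⟨h1, h2, h3⟩, rfl | rfl⟩
      · exact ⟨w, ⟨h3, h1⟩, rfl⟩
      · exact ⟨u, ⟨h2, h1.symm⟩, Sym2.eq_swap⟩
    · rintro ⟨y, ⟨h1, h2⟩, h3⟩
      rcases Sym2.eq_iff.1 h3 with ⟨rfl, rfl⟩ | ⟨rfl, rfl⟩
      · exact ⟨⟨h2, hx, h1⟩, Or.inl rfl⟩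
      · exact ⟨⟨h2.symm, h1, hx⟩, Or.inr rfl⟩

theorem s_inj {W : Type*} (x : W) : Function.Injective (fun y : W => s(x, y)) := by
  intro y z h
  exact Sym2.congr_right.1 h

theorem card_inc_eJ {W : Type*} [Fintype W] {H : SimpleGraph W} {J : Finset W} {x : W}
    (hx : x ∈ J) : ((eJ H J).filter (fun e => x ∈ e)).card = (nb H J x).card := by
  rw [inc_eJ hx, Finset.card_image_of_injective _ (s_inj x)]

theorem MinUnbal.sum_eq {W : Type*} [Fintype W] {H : SimpleGraph W} {f : Sym2 W → ZMod 2}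
    {J : Finset W} (h : MinUnbal H f J) : ∑ e ∈ eJ H J, f e ≠ 0 := by
  obtain ⟨a, ha⟩ := h.cn.1
  obtain ⟨p, hp⟩ := h.2 a ha
  obtain ⟨y0, y1, hnb, hy, hne⟩ := h.nb_eq ha hp
  have hzero : ∑ e ∈ eJ H J, ∑ x ∈ J with x ∈ e, p x = 0 := by
    simp_rw [Finset.sum_filter]
    rw [Finset.sum_comm]
    apply Finset.sum_eq_zero
    intro x hx
    rw [← Finset.sum_filter, Finset.sum_const, card_inc_eJ hx, h.card_nb hx]
    exact CharTwo.two_nsmul _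
  have hedge : ∀ x y, s(x, y) ∈ eJ H J → ∑ z ∈ J with z ∈ s(x, y), p z = p x + p y := by
    intro x y hxy
    rw [mem_eJ] at hxy
    have : (J.filter (fun z => z ∈ s(x, y))) = {x, y} := by
      ext z
      simp only [Finset.mem_filter, Sym2.mem_iff, Finset.mem_insert, Finset.mem_singleton]
      constructor
      · exact fun h => h.2
      · rintro (rfl | rfl)
        · exact ⟨hxy.2.1, Or.inl rfl⟩
        · exact ⟨hxy.2.2, Or.inr rfl⟩
    rw [this, Finset.sum_pair hxy.1.ne]
  have hsum : ∑ e ∈ eJ H J, f e = ∑ e ∈ eJ H J, (f e + ∑ x ∈ J with x ∈ e, p x) := by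
    rw [Finset.sum_add_distrib, hzero, add_zero]
  have hres : ∑ e ∈ eJ H J, (f e + ∑ x ∈ J with x ∈ e, p x) =
      ∑ e ∈ (eJ H J).filter (fun e => a ∈ e), (f e + ∑ x ∈ J with x ∈ e, p x) := by
    symm
    apply Finset.sum_subset (Finset.filter_subset _ _)
    intro e he hae
    induction e using Sym2.ind with
    | _ u w =>
      rw [hedge u w he]
      have he' := mem_eJ.1 he
      have hau : a ∉ s(u, w) := fun h => hae (Finset.mem_filter.2 ⟨he, h⟩)
      rw [Sym2.mem_iff] at hau
      push Not at hau
      rw [hp u (Finset.mem_erase.2 ⟨hau.1.symm, he'.2.1⟩) w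
        (Finset.mem_erase.2 ⟨hau.2.symm, he'.2.2⟩) he'.1]
      exact CharTwo.add_self_eq_zero _
  have hm0 : y0 ∈ nb H J a := by simp [hnb]
  have hm1 : y1 ∈ nb H J a := by simp [hnb]
  rw [mem_nb] at hm0 hm1
  rw [hsum, hres, inc_eJ ha, hnb, Finset.sum_image (fun x _ y _ hxy => s_inj a hxy),
    Finset.sum_pair hy, hedge a y0 (mem_eJ.2 ⟨hm0.2, ha, hm0.1⟩),
    hedge a y1 (mem_eJ.2 ⟨hm1.2, ha, hm1.1⟩)]
  intro hc
  apply hne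
  revert hc
  generalize f s(a, y0) = u1
  generalize f s(a, y1) = u2
  generalize p a = u3
  generalize p y0 = u4
  generalize p y1 = u5
  revert u1 u2 u3 u4 u5
  decide


/-- Peripheral (induced, nonseparating) cycles, as vertex sets. -/
def IsPer {W : Type*} [Fintype W] (H : SimpleGraph W) (J : Finset W) : Prop :=
  Cn H J ∧ (∀ a ∈ J, (nb H J a).card = 2) ∧ Cn H Jᶜ ∧ ∀ a ∈ J, ∃ b ∈ Jᶜ, H.Adj a b

theorem pot_nbr {W : Type*} {H : SimpleGraph W} {f : Sym2 W → ZMod 2} {U U' M : Finset W}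
    {p q : W → ZMod 2} (hp : Pot H f U p) (hq : Pot H f U' q) (hpq : ∀ x ∈ M, p x = q x)
    (hMU : M ⊆ U) (hMU' : M ⊆ U') {a m : W} (hm : m ∈ M) (hma : H.Adj m a) (ha : a ∈ U)
    (ha' : a ∈ U') : p a = q a := by
  have h1 := hp m (hMU hm) a ha hma
  have h2 := hq m (hMU' hm) a ha' hma
  rw [h1, hpq m hm] at h2
  exact add_left_cancel h2

theorem three_bal {W : Type*} {H : SimpleGraph W} {f : Sym2 W → ZMod 2} {J M : Finset W}
    (hM : Cn H M) (hMJ : M ⊆ J) {a b c : W} (ha : a ∈ J) (hb : b ∈ J) (hc : c ∈ J)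
    (hab : a ≠ b) (hac : a ≠ c) (hbc : b ≠ c) (haM : a ∉ M) (hbM : b ∉ M) (hcM : c ∉ M)
    (ha' : ∃ m ∈ M, H.Adj m a) (hb' : ∃ m ∈ M, H.Adj m b) (hc' : ∃ m ∈ M, H.Adj m c)
    (hBa : Bal H f (J.erase a)) (hBb : Bal H f (J.erase b)) (hBc : Bal H f (J.erase c)) :
    Bal H f J := by
  obtain ⟨w, hw⟩ := hM.1
  obtain ⟨_, h⟩ := hBa
  obtain ⟨pa, hpa, hpaw⟩ := h.normalize w 0
  obtain ⟨_, h⟩ := hBb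
  obtain ⟨pb, hpb, hpbw⟩ := h.normalize w 0
  obtain ⟨_, h⟩ := hBc
  obtain ⟨pc, hpc, hpcw⟩ := h.normalize w 0
  have sub : ∀ {z : W} {N : Finset W}, z ∉ N → N ⊆ J → N ⊆ J.erase z := by
    intro z N hz hN x hx
    exact Finset.mem_erase.2 ⟨fun h => hz (h ▸ hx), hN hx⟩
  obtain ⟨M', h1, h2, h3, h4⟩ := exists_comp (U := (J.erase a).erase b) hM
    (by
      intro x hx
      exact Finset.mem_erase.2 ⟨fun h => hbM (h ▸ hx), sub haM hMJ hx⟩)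
  have hM'J : M' ⊆ J := h2.trans ((Finset.erase_subset _ _).trans (Finset.erase_subset _ _))
  have haM' : a ∉ M' := fun h => by simpa using h2 h
  have hbM' : b ∉ M' := fun h => by simpa using h2 h
  obtain ⟨mc, hmc, hmcc⟩ := hc'
  obtain ⟨ma, hma, hmaa⟩ := ha'
  obtain ⟨mb, hmb, hmbb⟩ := hb'
  have hcM' : c ∈ M' := h4 mc (h1 hmc) c (by simp [hc, hac.symm, hbc.symm]) hmcc
  have e1 : ∀ x ∈ M', pa x = pb x :=
    Pot.unique (hpa.mono (sub haM' hM'J)) (hpb.mono (sub hbM' hM'J)) h3 (h1 hw)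
      (hpaw.trans hpbw.symm)
  have e2 : ∀ x ∈ M, pa x = pc x :=
    Pot.unique (hpa.mono (sub haM hMJ)) (hpc.mono (sub hcM hMJ)) hM hw (hpaw.trans hpcw.symm)
  have e3 : ∀ x ∈ M, pb x = pc x :=
    Pot.unique (hpb.mono (sub hbM hMJ)) (hpc.mono (sub hcM hMJ)) hM hw (hpbw.trans hpcw.symm)
  have e4 : pa b = pc b := pot_nbr hpa hpc e2 (sub haM hMJ) (sub hcM hMJ) hmb hmbb
    (by simp [hb, hab.symm]) (by simp [hb, hbc])
  have e5 : pb a = pc a := pot_nbr hpb hpc e3 (sub hbM hMJ) (sub hcM hMJ) hma hmaa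
    (by simp [ha, hab]) (by simp [ha, hac])
  have key : ∀ x ∈ M', ∀ y ∈ J, y ∉ M' → H.Adj x y → f s(x, y) = pa x + pc y := by
    intro x hx y hy hyM hxy
    by_cases hya : y = a
    · subst hya
      rw [← e5, e1 x hx]
      exact hpb x (sub hbM' hM'J hx) y (by simp [hy, hab]) hxy
    · by_cases hyb : y = b
      · subst hyb
        rw [← e4]
        exact hpa x (sub haM' hM'J hx) y (by simp [hy, hab.symm]) hxy
      · exact absurd (h4 x hx y (by simp [hy, hya, hyb]) hxy) hyM
  refine ⟨fun x => if x ∈ M' then pa x else pc x, ?_⟩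
  intro x hx y hy hxy
  by_cases hxM : x ∈ M' <;> by_cases hyM : y ∈ M'
  · simp only [hxM, hyM, if_true]
    exact hpa x (sub haM' hM'J hxM) y (sub haM' hM'J hyM) hxy
  · simp only [hxM, hyM, if_true, if_false]
    exact key x hxM y hy hyM hxy
  · simp only [hxM, hyM, if_true, if_false]
    rw [Sym2.eq_swap, add_comm]
    exact key y hyM x hx hxM hxy.symm
  · simp only [hxM, hyM, if_false]
    exact hpc x (Finset.mem_erase.2 ⟨fun h => hxM (h ▸ hcM'), hx⟩) y
      (Finset.mem_erase.2 ⟨fun h => hyM (h ▸ hcM'), hy⟩) hxy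

theorem tutte {W : Type*} [Fintype W] {H : SimpleGraph W}
    (h3 : ∀ X : Finset W, X.card ≤ 2 → Cn H Xᶜ)
    (hdeg : ∀ x, 3 ≤ (nb H Finset.univ x).card) (f : Sym2 W → ZMod 2)
    (hf : ∀ J, IsPer H J → ∑ e ∈ eJ H J, f e = 0) : Bal H f Finset.univ := by
  by_contra hunb
  have hstart : ∃ x : W, ¬ Bal H f (Finset.univ.erase x) := by
    by_contra hc
    push Not at hc
    have hmin : MinUnbal H f Finset.univ := ⟨hunb, fun a _ => hc a⟩
    obtain ⟨a, ha⟩ := hmin.cn.1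
    have := hmin.card_nb ha
    have := hdeg a
    omega
  have hne : ((Finset.univ : Finset (Finset W)).filter
      (fun K => Cn H K ∧ ¬ Bal H f Kᶜ)).Nonempty := by
    obtain ⟨x, hx⟩ := hstart
    refine ⟨{x}, ?_⟩
    simp only [Finset.mem_filter, Finset.mem_univ, true_and]
    refine ⟨Cn.singleton H x, ?_⟩
    have : ({x} : Finset W)ᶜ = Finset.univ.erase x := by ext; simp
    rwa [this]
  obtain ⟨K, hK, hmax⟩ := Finset.exists_max_image _ Finset.card hne
  simp only [Finset.mem_filter, Finset.mem_univ, true_and] at hK hmax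
  obtain ⟨hKc, hKb⟩ := hK
  have hbal : ∀ a ∈ Kᶜ, (∃ k ∈ K, H.Adj k a) → Bal H f (Kᶜ.erase a) := by
    rintro a ha ⟨k, hk, hka⟩
    by_contra hb
    have := hmax (insert a K) ⟨hKc.insert hk hka, by rwa [Finset.compl_insert]⟩
    rw [Finset.card_insert_of_notMem (by simpa using ha)] at this
    omega
  have hall : ∀ w ∈ Kᶜ, ∃ k ∈ K, H.Adj k w := by
    intro w hw
    by_contra hwn
    let A := Kᶜ.filter (fun w => ∃ k ∈ K, H.Adj k w)
    have hA : ∀ z, z ∈ A ↔ z ∉ K ∧ ∃ k ∈ K, H.Adj k z := by intro z; simp [A]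
    obtain ⟨M, hM1, hM2, hM3, hM4⟩ := exists_comp (U := Kᶜ \ A) (Cn.singleton H w) (by
      rw [Finset.singleton_subset_iff, Finset.mem_sdiff]
      exact ⟨hw, fun h => hwn ((hA w).1 h).2⟩)
    have hM2' : ∀ x ∈ M, x ∉ K ∧ x ∉ A := by
      intro x hx
      have := Finset.mem_sdiff.1 (hM2 hx)
      exact ⟨by simpa using this.1, this.2⟩
    let N := A.filter (fun a => ∃ m ∈ M, H.Adj m a)
    have hN : ∀ z, z ∈ N ↔ z ∈ A ∧ ∃ m ∈ M, H.Adj m z := by intro z; simp [N]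
    have hNcard : 2 < N.card := by
      by_contra hle
      have hcn := h3 N (by omega)
      obtain ⟨k, hk⟩ := hKc.1
      obtain ⟨x, hx, y, hy, hyM, hxy⟩ := hcn.2 M (by
          intro x hx
          rw [Finset.mem_compl, hN]
          exact fun h => (hM2' x hx).2 h.1) hM3.1 (by
          intro hc
          have : k ∈ M := by
            rw [hc, Finset.mem_compl, hN, hA]
            exact fun h => h.1.1 hk
          exact (hM2' k this).1 hk)
      have hxA := hM2' x hx
      have hyK : y ∉ K := fun h => hxA.2 ((hA x).2 ⟨hxA.1, y, h, hxy.symm⟩)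
      by_cases hyA : y ∈ A
      · rw [Finset.mem_compl] at hy
        exact hy ((hN y).2 ⟨hyA, x, hx, hxy⟩)
      · exact hyM (hM4 x hx y (by simp [hyK, hyA]) hxy)
    obtain ⟨a, b, c, ha, hb, hc, hab, hac, hbc⟩ := Finset.two_lt_card_iff.1 hNcard
    rw [hN, hA] at ha hb hc
    apply hKb
    have hnM : ∀ z, (z ∉ K ∧ ∃ k ∈ K, H.Adj k z) → z ∉ M := fun z hz hzM =>
      (hM2' z hzM).2 ((hA z).2 hz)
    have hC : ∀ {z}, z ∉ K → z ∈ Kᶜ := by intro z; simp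
    exact three_bal hM3 (hM2.trans Finset.sdiff_subset) (hC ha.1.1) (hC hb.1.1) (hC hc.1.1)
      hab hac hbc (hnM a ha.1) (hnM b hb.1) (hnM c hc.1) ha.2 hb.2 hc.2
      (hbal a (hC ha.1.1) ha.1.2) (hbal b (hC hb.1.1) hb.1.2) (hbal c (hC hc.1.1) hc.1.2)
  have hmin : MinUnbal H f Kᶜ := ⟨hKb, fun a ha => hbal a ha (hall a ha)⟩
  refine hmin.sum_eq (hf Kᶜ ⟨hmin.cn, fun a ha => hmin.card_nb ha, by rwa [compl_compl], ?_⟩)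
  intro a ha
  obtain ⟨k, hk, hka⟩ := hall a ha
  exact ⟨k, by rwa [compl_compl], hka.symm⟩

/-- The set of peripheral cycles. -/
noncomputable def Per {W : Type*} [Fintype W] (H : SimpleGraph W) : Finset (Finset W) :=
  Finset.univ.filter (fun J => IsPer H J)

theorem rank_bound {W : Type*} [Fintype W] [Nonempty W] {H : SimpleGraph W}
    (h3 : ∀ X : Finset W, X.card ≤ 2 → Cn H Xᶜ)
    (hdeg : ∀ x, 3 ≤ (nb H Finset.univ x).card) :
    H.edgeFinset.card + 1 ≤ (Per H).card + Fintype.card W := by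
  let E := {e : Sym2 W // e ∈ H.edgeFinset}
  let P := {J : Finset W // J ∈ Per H}
  let Φ : (E → ZMod 2) →ₗ[ZMod 2] (P → ZMod 2) :=
    { toFun := fun g J => ∑ e : E, if e.1 ∈ eJ H J.1 then g e else 0
      map_add' := by
        intro g g'
        ext J
        simp only [Pi.add_apply]
        rw [← Finset.sum_add_distrib]
        apply Finset.sum_congr rfl
        intro e _
        split_ifs <;> simp
      map_smul' := by
        intro c g
        ext J
        simp only [Pi.smul_apply, smul_eq_mul, RingHom.id_apply]
        rw [Finset.mul_sum]
        apply Finset.sum_congr rfl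
        intro e _
        split_ifs <;> simp }
  let δ : (W → ZMod 2) →ₗ[ZMod 2] (E → ZMod 2) :=
    { toFun := fun p e => p (Quot.out e.1).1 + p (Quot.out e.1).2
      map_add' := by
        intro p q
        ext e
        simp only [Pi.add_apply]
        ring
      map_smul' := by
        intro c p
        ext e
        simp only [Pi.smul_apply, smul_eq_mul, RingHom.id_apply]
        ring }
  have hker : LinearMap.ker Φ ≤ LinearMap.range δ := by
    intro g hg
    rw [LinearMap.mem_ker] at hg
    let f : Sym2 W → ZMod 2 := fun e => if h : e ∈ H.edgeFinset then g ⟨e, h⟩ else 0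
    have hbal := tutte h3 hdeg f (by
      intro J hJ
      have h1 := congrFun hg ⟨J, by simp [Per, hJ]⟩
      have h2 : ∑ e : E, (if e.1 ∈ eJ H J then g e else 0) = 0 := h1
      rw [← h2]
      have h4 : ∑ e : E, (if e.1 ∈ eJ H J then g e else 0) =
          ∑ e : E, (if e.1 ∈ eJ H J then f e.1 else 0) := by
        apply Finset.sum_congr rfl
        intro e _
        simp only [f]
        rw [dif_pos e.2]
      rw [h4, Finset.sum_coe_sort H.edgeFinset (fun e => if e ∈ eJ H J then f e else 0),
        ← Finset.sum_filter]
      apply Finset.sum_congr _ (fun _ _ => rfl)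
      ext e
      simp only [eJ, Finset.mem_filter]
      tauto)
    obtain ⟨p, hp⟩ := hbal
    refine ⟨p, ?_⟩
    ext e
    have hout : s((Quot.out e.1).1, (Quot.out e.1).2) = e.1 := Quot.out_eq e.1
    have hadj : H.Adj (Quot.out e.1).1 (Quot.out e.1).2 := by
      rw [← SimpleGraph.mem_edgeSet, hout]
      exact SimpleGraph.mem_edgeFinset.1 e.2
    have := hp _ (Finset.mem_univ _) _ (Finset.mem_univ _) hadj
    rw [hout] at this
    simp only [f] at this
    rw [dif_pos e.2] at this
    exact this.symm
  have hδ : Module.finrank (ZMod 2) (LinearMap.range δ) + 1 ≤ Fintype.card W := by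
    have hrn := LinearMap.finrank_range_add_finrank_ker δ
    rw [Module.finrank_fintype_fun_eq_card] at hrn
    have hpos : 0 < Module.finrank (ZMod 2) (LinearMap.ker δ) := by
      rw [Module.finrank_pos_iff_exists_ne_zero]
      refine ⟨⟨fun _ => 1, ?_⟩, ?_⟩
      · rw [LinearMap.mem_ker]
        ext e
        exact CharTwo.add_self_eq_zero (1 : ZMod 2)
      · intro hc
        have h1 := congrArg Subtype.val hc
        obtain ⟨w⟩ := ‹Nonempty W›
        have h2 := congrFun h1 w
        exact absurd h2 (by simp)
    omega
  have hΦ := LinearMap.finrank_range_add_finrank_ker Φ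
  have h1 : Module.finrank (ZMod 2) (LinearMap.range Φ) ≤ (Per H).card := by
    have := Submodule.finrank_le (LinearMap.range Φ)
    rwa [Module.finrank_fintype_fun_eq_card, Fintype.card_coe] at this
  have h2 := Submodule.finrank_mono hker
  rw [Module.finrank_fintype_fun_eq_card, Fintype.card_coe] at hΦ
  omega


theorem Cn.union' {W : Type*} {H : SimpleGraph W} {A B : Finset W} (hA : Cn H A) (hB : Cn H B)
    (h : (A ∩ B).Nonempty) : Cn H (A ∪ B) := by
  obtain ⟨c, hc⟩ := h
  have hc' := Finset.mem_inter.1 hc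
  obtain ⟨M, h1, h2, h3, h4⟩ := exists_comp (U := A ∪ B) hA Finset.subset_union_left
  have hM : M = A ∪ B := by
    apply Finset.Subset.antisymm h2
    apply Finset.union_subset h1
    by_contra hBM
    obtain ⟨x, hx, y, hy, hyM, hxy⟩ := hB.2 (M ∩ B) Finset.inter_subset_right
      ⟨c, Finset.mem_inter.2 ⟨h1 hc'.1, hc'.2⟩⟩ (by
        intro hc
        exact hBM (by rw [← hc]; exact Finset.inter_subset_left))
    have hx' := Finset.mem_inter.1 hx
    exact hyM (Finset.mem_inter.2 ⟨h4 x hx'.1 y (by simp [hy]) hxy, hy⟩)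
  rwa [hM] at h3

theorem handshake {W : Type*} [Fintype W] (H : SimpleGraph W) (R : Finset W) :
    ∑ x ∈ R, (nb H R x).card = 2 * (eJ H R).card := by
  have h1 : ∑ x ∈ R, (nb H R x).card = ∑ x ∈ R, ((eJ H R).filter (fun e => x ∈ e)).card :=
    Finset.sum_congr rfl (fun x hx => (card_inc_eJ hx).symm)
  have h2 := Finset.sum_card_bipartiteAbove_eq_sum_card_bipartiteBelow (s := R) (t := eJ H R)
    (fun x e => x ∈ e)
  simp only [Finset.bipartiteAbove, Finset.bipartiteBelow] at h2
  rw [h1, h2]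
  have h5 : ∀ e ∈ eJ H R, (R.filter (fun x => x ∈ e)).card = 2 := by
    intro e he
    induction e using Sym2.ind with
    | _ u w =>
      have he' := mem_eJ.1 he
      have : R.filter (fun x => x ∈ s(u, w)) = {u, w} := by
        ext z
        simp only [Finset.mem_filter, Sym2.mem_iff, Finset.mem_insert, Finset.mem_singleton]
        constructor
        · exact fun h => h.2
        · rintro (rfl | rfl)
          · exact ⟨he'.2.1, Or.inl rfl⟩
          · exact ⟨he'.2.2, Or.inr rfl⟩
      rw [this, Finset.card_pair he'.1.ne]
  rw [Finset.sum_congr rfl h5, Finset.sum_const, smul_eq_mul, mul_comm]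

theorem nb_mono {W : Type*} {H : SimpleGraph W} {J J' : Finset W} (h : J ⊆ J') (x : W) :
    nb H J x ⊆ nb H J' x := by
  intro y hy
  rw [mem_nb] at hy ⊢
  exact ⟨h hy.1, hy.2⟩

theorem nb_split {W : Type*} {H : SimpleGraph W} {J R : Finset W} (h : R ⊆ J) (x : W) :
    (nb H R x).card + (nb H (J \ R) x).card = (nb H J x).card := by
  rw [← Finset.card_union_of_disjoint]
  · congr 1
    ext y
    simp only [Finset.mem_union, mem_nb, Finset.mem_sdiff]
    constructor
    · rintro (⟨h1, h2⟩ | ⟨⟨h1, _⟩, h2⟩)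
      · exact ⟨h h1, h2⟩
      · exact ⟨h1, h2⟩
    · rintro ⟨h1, h2⟩
      by_cases hy : y ∈ R
      · exact Or.inl ⟨hy, h2⟩
      · exact Or.inr ⟨⟨h1, hy⟩, h2⟩
  · rw [Finset.disjoint_left]
    intro y hy hy'
    rw [mem_nb] at hy hy'
    exact (Finset.mem_sdiff.1 hy'.1).2 hy.1

theorem nb_double {W : Type*} {H : SimpleGraph W} (A B : Finset W) :
    ∑ x ∈ A, (nb H B x).card = ∑ y ∈ B, (nb H A y).card := by
  have h2 := Finset.sum_card_bipartiteAbove_eq_sum_card_bipartiteBelow (s := A) (t := B)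
    (fun x y => H.Adj x y)
  simp only [Finset.bipartiteAbove, Finset.bipartiteBelow] at h2
  simp only [nb]
  rw [h2]
  simp only [H.adj_comm]

theorem bd_le {W : Type*} {H : SimpleGraph W} {J R : Finset W}
    (h2 : ∀ a ∈ J, (nb H J a).card = 2) (hR : Cn H R) (hRJ : R ⊆ J) :
    ∑ x ∈ R, (nb H (J \ R) x).card ≤ 2 := by
  obtain ⟨r, hr⟩ := hR.1
  have hne : (R.powerset.filter (fun X => X.Nonempty ∧
      ∑ x ∈ X, (nb H (J \ X) x).card ≤ 2)).Nonempty := by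
    refine ⟨{r}, ?_⟩
    simp only [Finset.mem_filter, Finset.mem_powerset, Finset.singleton_subset_iff,
      Finset.sum_singleton, Finset.singleton_nonempty, true_and]
    refine ⟨hr, ?_⟩
    rw [← h2 r (hRJ hr)]
    exact Finset.card_le_card (nb_mono Finset.sdiff_subset r)
  obtain ⟨X, hX, hmax⟩ := Finset.exists_max_image _ Finset.card hne
  simp only [Finset.mem_filter, Finset.mem_powerset] at hX hmax
  obtain ⟨hXR, hXne, hXb⟩ := hX
  by_cases hXeq : X = R
  · rwa [← hXeq]
  exfalso
  obtain ⟨x, hx, w, hw, hwX, hxw⟩ := hR.2 X hXR hXne hXeq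
  have hwJ := hRJ hw
  have hk : 1 ≤ (nb H X w).card :=
    Finset.card_pos.2 ⟨x, mem_nb.2 ⟨hx, hxw.symm⟩⟩
  have hstep : ∀ z ∈ X, (nb H (J \ X) z).card =
      (nb H (J \ insert w X) z).card + if H.Adj w z then 1 else 0 := by
    intro z hz
    have hsub : {w} ⊆ J \ X := by simp [hwJ, hwX]
    have := nb_split (H := H) hsub z
    have he : (J \ X) \ {w} = J \ insert w X := by
      ext u; simp only [Finset.mem_sdiff, Finset.mem_singleton, Finset.mem_insert]; tauto
    rw [he] at this
    rw [← this, add_comm]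
    congr 1
    simp only [nb, Finset.filter_singleton, H.adj_comm z w]
    split_ifs <;> simp
  have hsum := Finset.sum_congr rfl hstep
  rw [Finset.sum_add_distrib, ← Finset.card_filter] at hsum
  have hfil : (X.filter (fun z => H.Adj w z)).card = (nb H X w).card := rfl
  rw [hfil] at hsum
  have hw2 : (nb H X w).card + (nb H (J \ insert w X) w).card ≤ 2 := by
    rw [← h2 w hwJ, ← nb_split (H := H) (hXR.trans hRJ) w]
    apply Nat.add_le_add_left
    apply Finset.card_le_card (nb_mono _ w)
    intro u hu
    simp only [Finset.mem_sdiff, Finset.mem_insert] at hu ⊢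
    tauto
  have := hmax (insert w X) ⟨Finset.insert_subset hw hXR, Finset.insert_nonempty _ _, by
    rw [Finset.sum_insert hwX]
    omega⟩
  rw [Finset.card_insert_of_notMem hwX] at this
  omega

theorem cyc_sub_eq {W : Type*} {H : SimpleGraph W} {J X : Finset W} (hJ : Cn H J)
    (h2 : ∀ a ∈ J, (nb H J a).card = 2) (hXJ : X ⊆ J) (hne : X.Nonempty)
    (hX : ∀ a ∈ X, 2 ≤ (nb H X a).card) : X = J := by
  by_contra hc
  obtain ⟨x, hx, y, hy, hyX, hxy⟩ := hJ.2 X hXJ hne hc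
  have heq : nb H X x = nb H J x := by
    apply Finset.eq_of_subset_of_card_le (nb_mono hXJ x)
    rw [h2 x (hXJ hx)]
    exact hX x hx
  have : y ∈ nb H X x := by rw [heq, mem_nb]; exact ⟨hy, hxy⟩
  exact hyX (mem_nb.1 this).1

theorem cyc_arc {W : Type*} [Fintype W] {H : SimpleGraph W} {J R : Finset W} (hJ : Cn H J)
    (h2 : ∀ a ∈ J, (nb H J a).card = 2) (hR : Cn H R) (hRJ : R ⊆ J)
    (hcard : 2 ≤ (J \ R).card) :
    ∃ s g, s ∈ J \ R ∧ g ∈ J \ R ∧ s ≠ g ∧ (nb H R s).card = 1 ∧ (nb H R g).card = 1 ∧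
      ∀ x ∈ R, ∀ y ∈ J \ R, H.Adj x y → y = s ∨ y = g := by
  have hb := bd_le h2 hR hRJ
  have heven : ∑ x ∈ R, (nb H R x).card + ∑ x ∈ R, (nb H (J \ R) x).card = 2 * R.card := by
    rw [← Finset.sum_add_distrib, Finset.sum_congr rfl (fun x hx => nb_split (H := H) hRJ x),
      Finset.sum_congr rfl (fun x hx => h2 x (hRJ hx)), Finset.sum_const, smul_eq_mul, mul_comm]
  rw [handshake] at heven
  have hRne : R ≠ J := by
    intro hc
    rw [hc] at hcard
    simp at hcard
  rw [nb_double] at hb heven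
  let T := (J \ R).filter (fun y => (nb H R y).Nonempty)
  have hT : ∀ y, y ∈ T ↔ y ∈ J \ R ∧ (nb H R y).Nonempty := by intro y; simp [T]
  have hTsum : ∑ y ∈ J \ R, (nb H R y).card = ∑ y ∈ T, (nb H R y).card := by
    symm
    apply Finset.sum_subset (Finset.filter_subset _ _)
    intro y hy hyT
    rw [hT] at hyT
    rw [Finset.card_eq_zero, ← Finset.not_nonempty_iff_eq_empty]
    exact fun h => hyT ⟨hy, h⟩
  have hT1 : ∀ y ∈ T, 1 ≤ (nb H R y).card := fun y hy => Finset.card_pos.2 ((hT y).1 hy).2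
  have hTle : T.card ≤ ∑ y ∈ T, (nb H R y).card := by
    have := Finset.sum_le_sum hT1
    simpa using this
  have hTmem : ∀ x ∈ R, ∀ y ∈ J \ R, H.Adj x y → y ∈ T := by
    intro x hx y hy hxy
    exact (hT y).2 ⟨hy, x, mem_nb.2 ⟨hx, hxy.symm⟩⟩
  obtain ⟨x, hx, y, hy, hyR, hxy⟩ := hJ.2 R hRJ hR.1 hRne
  have hyT := hTmem x hx y (by simp [hy, hyR]) hxy
  have hpos : 1 ≤ T.card := Finset.card_pos.2 ⟨y, hyT⟩
  have hb2 : ∑ y ∈ T, (nb H R y).card = 2 := by omega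
  have hT2 : T.card = 2 := by
    by_contra hc
    have h1 : T.card = 1 := by omega
    obtain ⟨s, hs⟩ := Finset.card_eq_one.1 h1
    rw [hs, Finset.sum_singleton] at hb2
    have hsT : s ∈ T := by simp [hs]
    have hsJ := Finset.mem_sdiff.1 ((hT s).1 hsT).1
    have := nb_split (H := H) hRJ s
    rw [hb2, h2 s hsJ.1] at this
    have hs0 : nb H (J \ R) s = ∅ := Finset.card_eq_zero.1 (by omega)
    obtain ⟨u, hu, w, hw, hwX, huw⟩ := hJ.2 (insert s R) (Finset.insert_subset hsJ.1 hRJ)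
      (Finset.insert_nonempty _ _) (by
        intro hc
        rw [← hc] at hcard
        have : (insert s R \ R) ⊆ {s} := by
          intro z hz
          simp only [Finset.mem_sdiff, Finset.mem_insert] at hz
          simp only [Finset.mem_singleton]
          tauto
        have := Finset.card_le_card this
        simp at this
        omega)
    rw [Finset.mem_insert, not_or] at hwX
    have hwJR : w ∈ J \ R := by simp [hw, hwX.2]
    rcases Finset.mem_insert.1 hu with rfl | hu
    · have : w ∈ nb H (J \ R) u := mem_nb.2 ⟨hwJR, huw⟩
      simp [hs0] at this
    · have := hTmem u hu w hwJR huw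
      rw [hs, Finset.mem_singleton] at this
      exact hwX.1 this
  obtain ⟨s, g, hsg, hTeq⟩ := Finset.card_eq_two.1 hT2
  have hsT : s ∈ T := by simp [hTeq]
  have hgT : g ∈ T := by simp [hTeq]
  rw [hTeq, Finset.sum_pair hsg] at hb2
  have := hT1 s hsT
  have := hT1 g hgT
  refine ⟨s, g, ((hT s).1 hsT).1, ((hT g).1 hgT).1, hsg, by omega, by omega, ?_⟩
  intro x hx y hy hxy
  have := hTmem x hx y hy hxy
  rw [hTeq] at this
  simpa using this

/-- Arc of `J` between two nonadjacent vertices through a given vertex. -/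
theorem cyc_arc' {W : Type*} [Fintype W] {H : SimpleGraph W} {J : Finset W} (hJ : Cn H J)
    (h2 : ∀ a ∈ J, (nb H J a).card = 2) {s g t : W} (hs : s ∈ J) (hg : g ∈ J) (hsg : s ≠ g)
    (ht : t ∈ J) (hts : t ≠ s) (htg : t ≠ g) :
    ∃ M : Finset W, t ∈ M ∧ M ⊆ J ∧ s ∉ M ∧ g ∉ M ∧ Cn H M ∧ (nb H M s).card = 1 ∧
      (nb H M g).card = 1 ∧ ∀ x ∈ M, ∀ y ∈ J, y ≠ s → y ≠ g → H.Adj x y → y ∈ M := by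
  obtain ⟨M, h1, hMU, hM, hcl⟩ := exists_comp (U := (J.erase s).erase g) (Cn.singleton H t)
    (by simp [ht, hts, htg])
  have hMJ : M ⊆ J := hMU.trans ((Finset.erase_subset _ _).trans (Finset.erase_subset _ _))
  have hsM : s ∉ M := fun h => by simpa using hMU h
  have hgM : g ∉ M := fun h => by simpa using hMU h
  have hcl' : ∀ x ∈ M, ∀ y ∈ J, y ≠ s → y ≠ g → H.Adj x y → y ∈ M := by
    intro x hx y hy hys hyg hxy
    exact hcl x hx y (by simp [hy, hys, hyg]) hxy
  obtain ⟨s', g', hs', hg', hne, hc1, hc2, hb⟩ := cyc_arc hJ h2 hM hMJ (by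
    have : ({s, g} : Finset W) ⊆ J \ M := by
      intro z hz
      rcases Finset.mem_insert.1 hz with rfl | hz
      · simp [hs, hsM]
      · rw [Finset.mem_singleton] at hz; subst hz; simp [hg, hgM]
    have := Finset.card_le_card this
    rwa [Finset.card_pair hsg] at this)
  have hin : ∀ z, z ∈ J \ M → (nb H M z).card = 1 → z = s ∨ z = g := by
    intro z hz hz1
    by_contra hc
    push Not at hc
    obtain ⟨x, hx⟩ := Finset.card_pos.1 (by omega : 0 < (nb H M z).card)
    rw [mem_nb] at hx
    rw [Finset.mem_sdiff] at hz
    exact hz.2 (hcl' x hx.1 z hz.1 hc.1 hc.2 hx.2.symm)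
  refine ⟨M, h1 (by simp), hMJ, hsM, hgM, hM, ?_, ?_, hcl'⟩
  · rcases hin s' hs' hc1 with rfl | rfl
    · exact hc1
    · rcases hin g' hg' hc2 with rfl | rfl
      · exact hc2
      · exact absurd rfl hne
  · rcases hin s' hs' hc1 with rfl | rfl
    · rcases hin g' hg' hc2 with rfl | rfl
      · exact absurd rfl hne
      · exact hc2
    · exact hc1

theorem touch_of_nb {W : Type*} {H : SimpleGraph W} {M : Finset W} {s : W}
    (h : (nb H M s).card = 1) : Touch H {s} M := by
  obtain ⟨x, hx⟩ := Finset.card_pos.1 (by omega : 0 < (nb H M s).card)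
  rw [mem_nb] at hx
  exact ⟨s, by simp, x, hx.1, hx.2⟩

theorem per_inter {W : Type*} [Fintype W] {H : SimpleGraph W}
    (hk33 : ¬ HasMinor H (completeBipartiteGraph (Fin 3) (Fin 3)))
    {J1 J2 : Finset W} (hJ1 : IsPer H J1) (hJ2 : IsPer H J2) (hne : J1 ≠ J2)
    (hcard : 2 ≤ (J1 ∩ J2).card) :
    ∃ s g, s ≠ g ∧ J1 ∩ J2 = {s, g} ∧ Cn H (J1 \ J2) ∧ Touch H {s} (J1 \ J2) ∧
      Touch H {g} (J1 \ J2) := by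
  obtain ⟨hc1, hd1, hk1, ht1⟩ := hJ1
  obtain ⟨hc2, hd2, hk2, ht2⟩ := hJ2
  have hns : ¬ J1 ⊆ J2 := by
    intro hsub
    exact hne (cyc_sub_eq hc2 hd2 hsub hc1.1 (fun a ha => (hd1 a ha).ge))
  obtain ⟨r, hr1, hr2⟩ := Finset.not_subset.1 hns
  obtain ⟨R, hrR, hRU, hR, hRcl⟩ := exists_comp (U := J1 \ J2) (Cn.singleton H r)
    (by simp [hr1, hr2])
  have hRJ1 : R ⊆ J1 := hRU.trans Finset.sdiff_subset
  have hRJ2 : ∀ x ∈ R, x ∉ J2 := fun x hx => (Finset.mem_sdiff.1 (hRU hx)).2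
  obtain ⟨s, g, hs, hg, hsg, hs1, hg1, hbd⟩ := cyc_arc hc1 hd1 hR hRJ1 (by
    refine hcard.trans (Finset.card_le_card ?_)
    intro z hz
    rw [Finset.mem_inter] at hz
    rw [Finset.mem_sdiff]
    exact ⟨hz.1, fun h => hRJ2 z h hz.2⟩)
  have hin : ∀ z, z ∈ J1 \ R → (nb H R z).card = 1 → z ∈ J2 := by
    intro z hz hz1
    by_contra hzJ
    obtain ⟨x, hx⟩ := Finset.card_pos.1 (by omega : 0 < (nb H R z).card)
    rw [mem_nb] at hx
    rw [Finset.mem_sdiff] at hz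
    exact hz.2 (hRcl x hx.1 z (by simp [hz.1, hzJ]) hx.2.symm)
  have hsJ2 := hin s hs hs1
  have hgJ2 := hin g hg hg1
  rw [Finset.mem_sdiff] at hs hg
  by_cases hadj : H.Adj s g
  · have hX : insert s (insert g R) = J1 := by
      apply cyc_sub_eq hc1 hd1
      · exact Finset.insert_subset hs.1 (Finset.insert_subset hg.1 hRJ1)
      · exact Finset.insert_nonempty _ _
      · have aux : ∀ a b : W, b ∈ insert s (insert g R) → b ∉ R → H.Adj a b →
            (nb H R a).card = 1 → 2 ≤ (nb H (insert s (insert g R)) a).card := by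
          intro a b hb hbR hab ha1
          have hsub : insert b (nb H R a) ⊆ nb H (insert s (insert g R)) a := by
            apply Finset.insert_subset (mem_nb.2 ⟨hb, hab⟩)
            apply nb_mono
            exact (Finset.subset_insert _ _).trans (Finset.subset_insert _ _)
          have := Finset.card_le_card hsub
          rw [Finset.card_insert_of_notMem (fun h => hbR (mem_nb.1 h).1), ha1] at this
          exact this
        intro a ha
        rcases Finset.mem_insert.1 ha with rfl | ha
        · exact aux a g (by simp) hg.2 hadj hs1
        rcases Finset.mem_insert.1 ha with rfl | ha
        · exact aux a s (by simp) hs.2 hadj.symm hg1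
        · rw [← hd1 a (hRJ1 ha)]
          apply Finset.card_le_card
          intro y hy
          rw [mem_nb] at hy ⊢
          refine ⟨?_, hy.2⟩
          by_cases hyR : y ∈ R
          · simp [hyR]
          · rcases hbd a ha y (by simp [hy.1, hyR]) hy.2 with rfl | rfl <;> simp
    have hdiff : J1 \ J2 = R := by
      apply Finset.Subset.antisymm _ hRU
      intro z hz
      rw [Finset.mem_sdiff, ← hX] at hz
      simp only [Finset.mem_insert] at hz
      rcases hz with ⟨rfl | rfl | h, hz2⟩
      · exact absurd hsJ2 hz2
      · exact absurd hgJ2 hz2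
      · exact h
    refine ⟨s, g, hsg, ?_, by rwa [hdiff], ?_, ?_⟩
    · ext z
      rw [Finset.mem_inter, ← hX]
      simp only [Finset.mem_insert, Finset.mem_singleton]
      constructor
      · rintro ⟨rfl | rfl | h, h'⟩
        · exact Or.inl rfl
        · exact Or.inr rfl
        · exact absurd h' (hRJ2 z h)
      · rintro (rfl | rfl)
        · exact ⟨Or.inl rfl, hsJ2⟩
        · exact ⟨Or.inr (Or.inl rfl), hgJ2⟩
    · rw [hdiff]; exact touch_of_nb hs1
    · rw [hdiff]; exact touch_of_nb hg1
  · exfalso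
    obtain ⟨t, ht⟩ := Finset.card_pos.1 (by rw [hd2 s hsJ2]; omega : 0 < (nb H J2 s).card)
    rw [mem_nb] at ht
    obtain ⟨α, htα, hαJ, hsα, hgα, hα, hα1, hα2, hαcl⟩ := cyc_arc' hc2 hd2 hsJ2 hgJ2 hsg ht.1
      ht.2.ne' (by rintro rfl; exact hadj ht.2)
    obtain ⟨t', ht'⟩ := Finset.card_pos.1 (by
      have := nb_split (H := H) hαJ s
      rw [hα1, hd2 s hsJ2] at this
      omega : 0 < (nb H (J2 \ α) s).card)
    rw [mem_nb, Finset.mem_sdiff] at ht'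
    obtain ⟨β, htβ, hβJ, hsβ, hgβ, hβ, hβ1, hβ2, hβcl⟩ := cyc_arc' hc2 hd2 hsJ2 hgJ2 hsg ht'.1.1
      ht'.2.ne' (by rintro rfl; exact hadj ht'.2)
    have hβne : ∀ z ∈ β, z ≠ s ∧ z ≠ g := fun z hz =>
      ⟨fun h => hsβ (h ▸ hz), fun h => hgβ (h ▸ hz)⟩
    have hαβ : Disjoint α β := by
      by_contra hc
      rw [Finset.not_disjoint_iff] at hc
      obtain ⟨z, hzα, hzβ⟩ := hc
      obtain ⟨x, hx, y, hy, hyX, hxy⟩ := hβ.2 (α ∩ β) Finset.inter_subset_right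
        ⟨z, by simp [hzα, hzβ]⟩ (by
          intro hc
          have : t' ∈ α ∩ β := by rw [hc]; exact htβ
          exact ht'.1.2 (Finset.mem_inter.1 this).1)
      rw [Finset.mem_inter] at hx hyX
      exact hyX ⟨hαcl x hx.1 y (hβJ hy) (hβne y hy).1 (hβne y hy).2 hxy, hy⟩
    have hnt : ¬ Touch H α β := by
      rintro ⟨a, ha, b, hb, hab⟩
      exact Finset.disjoint_left.1 hαβ
        (hαcl a ha b (hβJ hb) (hβne b hb).1 (hβne b hb).2 hab) hb
    have hcover : insert s (insert g (α ∪ β)) = J2 := by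
      apply cyc_sub_eq hc2 hd2
      · exact Finset.insert_subset hsJ2 (Finset.insert_subset hgJ2 (Finset.union_subset hαJ hβJ))
      · exact Finset.insert_nonempty _ _
      · have aux : ∀ a, (nb H α a).card = 1 → (nb H β a).card = 1 →
            2 ≤ (nb H (insert s (insert g (α ∪ β))) a).card := by
          intro a h1 h2
          have hdis : Disjoint (nb H α a) (nb H β a) :=
            Finset.disjoint_of_subset_left (Finset.filter_subset _ _)
              (Finset.disjoint_of_subset_right (Finset.filter_subset _ _) hαβ)
          have hsub : nb H α a ∪ nb H β a ⊆ nb H (insert s (insert g (α ∪ β))) a := by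
            apply Finset.union_subset
            · apply nb_mono
              intro z hz; simp [hz]
            · apply nb_mono
              intro z hz; simp [hz]
          have := Finset.card_le_card hsub
          rw [Finset.card_union_of_disjoint hdis, h1, h2] at this
          exact this
        have aux2 : ∀ (M : Finset W) (a : W), M ⊆ insert s (insert g (α ∪ β)) → M ⊆ J2 → a ∈ M →
            (∀ x ∈ M, ∀ y ∈ J2, y ≠ s → y ≠ g → H.Adj x y → y ∈ M) →
            2 ≤ (nb H (insert s (insert g (α ∪ β))) a).card := by
          intro M a hM hMJ ha hcl
          rw [← hd2 a (hMJ ha)]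
          apply Finset.card_le_card
          intro y hy
          rw [mem_nb] at hy ⊢
          refine ⟨?_, hy.2⟩
          by_cases hys : y = s
          · simp [hys]
          by_cases hyg : y = g
          · simp [hyg]
          exact hM (hcl a ha y hy.1 hys hyg hy.2)
        intro a ha
        rcases Finset.mem_insert.1 ha with rfl | ha
        · exact aux a hα1 hβ1
        rcases Finset.mem_insert.1 ha with rfl | ha
        · exact aux a hα2 hβ2
        rcases Finset.mem_union.1 ha with ha | ha
        · exact aux2 α a (fun z hz => by simp [hz]) hαJ ha hαcl
        · exact aux2 β a (fun z hz => by simp [hz]) hβJ ha hβcl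
    have hjoin : ∀ A M : Finset W, Cn H A → J1ᶜ ⊆ A → Cn H M → Cn H (A ∪ M) := by
      intro A M hA hAJ hM
      obtain ⟨m, hm⟩ := hM.1
      by_cases hmJ : m ∈ J1
      · obtain ⟨b, hb, hmb⟩ := ht1 m hmJ
        exact hA.union hM ⟨b, hAJ hb, m, hm, hmb.symm⟩
      · exact hA.union' hM ⟨m, by
          rw [Finset.mem_inter]; exact ⟨hAJ (by simpa using hmJ), hm⟩⟩
    have hU : Cn H ((J1ᶜ ∪ α) ∪ β) :=
      hjoin _ _ (hjoin _ _ hk1 (Finset.Subset.refl _) hα) Finset.subset_union_left hβ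
    obtain ⟨Z, hZU, hZα, hZβ, hZ, hZtα, hZtβ⟩ := connector hU hα
      (fun z hz => by simp [hz]) (B := β) (by
        obtain ⟨b, hb⟩ := hβ.1; exact ⟨b, by simp [hb]⟩) hαβ hnt
    have hZK1 : ∀ z ∈ Z, z ∉ J1 := by
      intro z hz
      have := hZU hz
      rw [Finset.mem_union, Finset.mem_union] at this
      rcases this with (h | h) | h
      · simpa using h
      · exact absurd h (Finset.disjoint_left.1 hZα hz)
      · exact absurd h (Finset.disjoint_left.1 hZβ hz)
    have hZK2 : Z ⊆ J2ᶜ := by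
      intro z hz
      rw [Finset.mem_compl, ← hcover]
      simp only [Finset.mem_insert, Finset.mem_union, not_or]
      refine ⟨?_, ?_, Finset.disjoint_left.1 hZα hz, Finset.disjoint_left.1 hZβ hz⟩
      · rintro rfl; exact hZK1 _ hz hs.1
      · rintro rfl; exact hZK1 _ hz hg.1
    obtain ⟨Z', hZZ', hZ'U, hZ'd, hZ', hZ't⟩ := extend_touch hk2 hZ hZK2 (R := R) (by
        exact ⟨r, by simp [hrR (Finset.mem_singleton_self r), hr2]⟩)
      (by
        rw [Finset.disjoint_left]
        intro z hz hzR
        exact hZK1 z hz (hRJ1 hzR))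
    have hZ'J : ∀ {M : Finset W}, M ⊆ J2 → Disjoint M Z' := by
      intro M hM
      rw [Finset.disjoint_left]
      intro z hz hz'
      exact (Finset.mem_compl.1 (hZ'U hz')) (hM hz)
    have hRJ : ∀ {M : Finset W}, M ⊆ J2 → Disjoint M R := by
      intro M hM
      rw [Finset.disjoint_left]
      intro z hz hz'
      exact hRJ2 z hz' (hM hz)
    have hss : ({s} : Finset W) ⊆ J2 := by simpa using hsJ2
    have hgs : ({g} : Finset W) ⊆ J2 := by simpa using hgJ2
    apply hk33
    refine k33_minor ![{s}, {g}, Z'] ![α, β, R] ?_ ?_ ?_ ?_ ?_ ?_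
    · intro i
      fin_cases i
      · exact Cn.singleton H s
      · exact Cn.singleton H g
      · exact hZ'
    · intro i
      fin_cases i
      · exact hα
      · exact hβ
      · exact hR
    · intro i j hij
      fin_cases i <;> fin_cases j <;> first | exact absurd rfl hij | skip
      · simpa using hsg
      · exact hZ'J hss
      · simpa using hsg.symm
      · exact hZ'J hgs
      · exact (hZ'J hss).symm
      · exact (hZ'J hgs).symm
    · intro i j hij
      fin_cases i <;> fin_cases j <;> first | exact absurd rfl hij | skip
      · exact hαβ
      · exact hRJ hαJ
      · exact hαβ.symm
      · exact hRJ hβJ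
      · exact (hRJ hαJ).symm
      · exact (hRJ hβJ).symm
    · intro i j
      fin_cases i <;> fin_cases j
      · simpa using hsα
      · simpa using hsβ
      · exact hRJ hss
      · simpa using hgα
      · simpa using hgβ
      · exact hRJ hgs
      · exact (hZ'J hαJ).symm
      · exact (hZ'J hβJ).symm
      · exact hZ'd
    · intro i j
      fin_cases i <;> fin_cases j
      · exact touch_of_nb hα1
      · exact touch_of_nb hβ1
      · exact touch_of_nb hs1
      · exact touch_of_nb hα2
      · exact touch_of_nb hβ2
      · exact touch_of_nb hg1
      · exact hZtα.mono hZZ' (Finset.Subset.refl _)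
      · exact hZtβ.mono hZZ' (Finset.Subset.refl _)
      · exact hZ't


theorem link {W : Type*} [Fintype W] {H : SimpleGraph W} {x y : W} {A B C : Finset W}
    (hA : Cn H A) (hB : Cn H B) (hAB : Disjoint A B) (hAC : Disjoint A C) (hBC : Disjoint B C)
    (hxA : x ∉ A) (hyA : y ∉ A) (hxB : x ∉ B) (hyB : y ∉ B)
    (hU : Cn H (insert x (insert y C))ᶜ) :
    ∃ Z : Finset W, Disjoint Z A ∧ Disjoint Z B ∧ Disjoint Z C ∧ x ∉ Z ∧ y ∉ Z ∧ Cn H (A ∪ Z) ∧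
      Touch H (A ∪ Z) B ∧ (Z = ∅ ∨ (Cn H Z ∧ Touch H Z A ∧ Touch H Z B)) := by
  rw [Finset.disjoint_left] at hAC hBC
  by_cases ht : Touch H A B
  · exact ⟨∅, by simp, by simp, by simp, by simp, by simp, by simpa using hA, by simpa using ht,
      Or.inl rfl⟩
  · obtain ⟨b, hb⟩ := hB.1
    obtain ⟨Z, h1, h2, h3, h4, h5, h6⟩ := connector hU hA
      (by intro a ha; simp only [Finset.mem_compl, Finset.mem_insert, not_or]
          exact ⟨fun h => hxA (h ▸ ha), fun h => hyA (h ▸ ha), hAC ha⟩)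
      (⟨b, by
        simp only [Finset.mem_inter, Finset.mem_compl, Finset.mem_insert, not_or]
        exact ⟨hb, fun h => hxB (h ▸ hb), fun h => hyB (h ▸ hb), hBC hb⟩⟩) hAB ht
    have h1' : ∀ z ∈ Z, z ≠ x ∧ z ≠ y ∧ z ∉ C := by
      intro z hz
      simpa [not_or] using h1 hz
    exact ⟨Z, h2, h3, Finset.disjoint_left.2 fun z hz => (h1' z hz).2.2,
      fun h => (h1' x h).1 rfl, fun h => (h1' y h).2.1 rfl, hA.union h4 h5.symm,
      h6.mono Finset.subset_union_right (Finset.Subset.refl _), Or.inr ⟨h4, h5, h6⟩⟩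

theorem theta_core {W : Type*} [Fintype W] {H : SimpleGraph W}
    (hk33 : ¬ HasMinor H (completeBipartiteGraph (Fin 3) (Fin 3)))
    (hk5 : ¬ HasMinor H (completeGraph (Fin 5)))
    {x y : W} {A B C : Finset W} (hxy : H.Adj x y)
    (hA : Cn H A) (hB : Cn H B) (hC : Cn H C)
    (hAB : Disjoint A B) (hAC : Disjoint A C) (hBC : Disjoint B C)
    (hxA : x ∉ A) (hyA : y ∉ A) (hxB : x ∉ B) (hyB : y ∉ B) (hxC : x ∉ C) (hyC : y ∉ C)
    (txA : Touch H {x} A) (tyA : Touch H {y} A) (txB : Touch H {x} B) (tyB : Touch H {y} B)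
    (txC : Touch H {x} C) (tyC : Touch H {y} C)
    (hUA : Cn H (insert x (insert y A))ᶜ) (hUB : Cn H (insert x (insert y B))ᶜ)
    (hUC : Cn H (insert x (insert y C))ᶜ) : False := by
  have noZ : ∀ Z : Finset W, Cn H Z → Disjoint Z A → Disjoint Z B → Disjoint Z C → x ∉ Z → y ∉ Z →
      Touch H Z A → Touch H Z B → Touch H Z C → False := by
    intro Z hZ d1 d2 d3 hx hy t1 t2 t3
    apply hk33
    have hne : x ≠ y := hxy.ne
    apply k33_minor ![{x}, {y}, Z] ![A, B, C]
    · intro i; fin_cases i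
      · exact Cn.singleton H x
      · exact Cn.singleton H y
      · exact hZ
    · intro i; fin_cases i <;> simpa
    · intro i j hij
      fin_cases i <;> fin_cases j <;> simp_all [hne.symm]
    · intro i j hij
      fin_cases i <;> fin_cases j <;>
        first | exact absurd rfl hij | assumption | (apply Disjoint.symm; assumption)
    · intro i j
      fin_cases i <;> fin_cases j <;> simp_all
    · intro i j
      fin_cases i <;> fin_cases j <;> simp_all
  obtain ⟨P, p1, p2, p3, p4, p5, p6, p7, p8⟩ := link hA hB hAB hAC hBC hxA hyA hxB hyB hUC
  obtain ⟨Q, q1, q2, q3, q4, q5, q6, q7, q8⟩ :=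
    link hB hC hBC hAB.symm hAC.symm hxB hyB hxC hyC hUA
  obtain ⟨R, r1, r2, r3, r4, r5, r6, r7, r8⟩ :=
    link hC hA hAC.symm hBC.symm hAB hxC hyC hxA hyA hUB
  have sl := @Finset.subset_union_left W _
  have sr := @Finset.subset_union_right W _
  have refl : ∀ S : Finset W, S ⊆ S := fun S => Finset.Subset.refl S
  have dPQ : Disjoint P Q := by
    by_contra hd
    rw [Finset.not_disjoint_iff] at hd
    obtain ⟨z, hz1, hz2⟩ := hd
    rcases p8 with rfl | ⟨c1, t1, t1'⟩
    · simp at hz1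
    rcases q8 with rfl | ⟨c2, t2, t2'⟩
    · simp at hz2
    refine noZ (P ∪ Q) (c1.union' c2 ⟨z, Finset.mem_inter.2 ⟨hz1, hz2⟩⟩) ?_ ?_ ?_ (by simp [*])
      (by simp [*]) (t1.mono sl (refl _)) (t1'.mono sl (refl _)) (t2'.mono sr (refl _)) <;>
      rw [Finset.disjoint_union_left] <;> exact ⟨by assumption, by assumption⟩
  have dQR : Disjoint Q R := by
    by_contra hd
    rw [Finset.not_disjoint_iff] at hd
    obtain ⟨z, hz1, hz2⟩ := hd
    rcases q8 with rfl | ⟨c1, t1, t1'⟩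
    · simp at hz1
    rcases r8 with rfl | ⟨c2, t2, t2'⟩
    · simp at hz2
    refine noZ (Q ∪ R) (c1.union' c2 ⟨z, Finset.mem_inter.2 ⟨hz1, hz2⟩⟩) ?_ ?_ ?_ (by simp [*])
      (by simp [*]) (t2'.mono sr (refl _)) (t1.mono sl (refl _)) (t1'.mono sl (refl _)) <;>
      rw [Finset.disjoint_union_left] <;> exact ⟨by assumption, by assumption⟩
  have dPR : Disjoint P R := by
    by_contra hd
    rw [Finset.not_disjoint_iff] at hd
    obtain ⟨z, hz1, hz2⟩ := hd
    rcases p8 with rfl | ⟨c1, t1, t1'⟩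
    · simp at hz1
    rcases r8 with rfl | ⟨c2, t2, t2'⟩
    · simp at hz2
    refine noZ (P ∪ R) (c1.union' c2 ⟨z, Finset.mem_inter.2 ⟨hz1, hz2⟩⟩) ?_ ?_ ?_ (by simp [*])
      (by simp [*]) (t1.mono sl (refl _)) (t1'.mono sl (refl _)) (t2.mono sr (refl _)) <;>
      rw [Finset.disjoint_union_left] <;> exact ⟨by assumption, by assumption⟩
  clear noZ p8 q8 r8
  have hne : x ≠ y := hxy.ne
  have e1 : Disjoint (A ∪ P) (B ∪ Q) := by
    simp only [Finset.disjoint_union_left, Finset.disjoint_union_right]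
    exact ⟨⟨hAB, p2⟩, q3.symm, dPQ⟩
  have e2 : Disjoint (A ∪ P) (C ∪ R) := by
    simp only [Finset.disjoint_union_left, Finset.disjoint_union_right]
    exact ⟨⟨hAC, p3⟩, r2.symm, dPR⟩
  have e3 : Disjoint (B ∪ Q) (C ∪ R) := by
    simp only [Finset.disjoint_union_left, Finset.disjoint_union_right]
    exact ⟨⟨hBC, q2⟩, r3.symm, dQR⟩
  have t1 : Touch H (A ∪ P) (B ∪ Q) := p7.mono (refl _) sl
  have t2 : Touch H (A ∪ P) (C ∪ R) := (r7.mono (refl _) sl).symm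
  have t3 : Touch H (B ∪ Q) (C ∪ R) := q7.mono (refl _) sl
  have f1 : Disjoint {x} (A ∪ P) := by simp [*]
  have f2 : Disjoint {x} (B ∪ Q) := by simp [*]
  have f3 : Disjoint {x} (C ∪ R) := by simp [*]
  have f4 : Disjoint {y} (A ∪ P) := by simp [*]
  have f5 : Disjoint {y} (B ∪ Q) := by simp [*]
  have f6 : Disjoint {y} (C ∪ R) := by simp [*]
  have f7 : Disjoint ({x} : Finset W) {y} := by simpa using hne
  have u1 := txA.mono (refl {x}) (sl (s₂ := P))
  have u2 := txB.mono (refl {x}) (sl (s₂ := Q))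
  have u3 := txC.mono (refl {x}) (sl (s₂ := R))
  have u4 := tyA.mono (refl {y}) (sl (s₂ := P))
  have u5 := tyB.mono (refl {y}) (sl (s₂ := Q))
  have u6 := tyC.mono (refl {y}) (sl (s₂ := R))
  have u7 : Touch H {x} {y} := ⟨x, by simp, y, by simp, hxy⟩
  have s1 := Cn.singleton H x
  have s2 := Cn.singleton H y
  apply hk5
  apply k5_minor ![{x}, {y}, A ∪ P, B ∪ Q, C ∪ R]
  · intro i; fin_cases i <;> assumption
  · intro i j hij
    fin_cases i <;> fin_cases j <;> first | assumption | (exact absurd hij (by decide))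
  · intro i j hij
    fin_cases i <;> fin_cases j <;> first | assumption | (exact absurd hij (by decide))

theorem per_pair {W : Type*} [Fintype W] {H : SimpleGraph W}
    (hk33 : ¬ HasMinor H (completeBipartiteGraph (Fin 3) (Fin 3)))
    {x y : W} {J1 J2 : Finset W} (hxy : x ≠ y) (h1 : IsPer H J1) (h2 : IsPer H J2) (hne : J1 ≠ J2)
    (hx1 : x ∈ J1) (hx2 : x ∈ J2) (hy1 : y ∈ J1) (hy2 : y ∈ J2) :
    (∀ z, z ∈ J1 → z ∈ J2 → z = x ∨ z = y) ∧
    Cn H (J1 \ {x, y}) ∧ Touch H {x} (J1 \ {x, y}) ∧ Touch H {y} (J1 \ {x, y}) := by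
  have hsub : ({x, y} : Finset W) ⊆ J1 ∩ J2 := by
    intro z hz
    simp only [Finset.mem_insert, Finset.mem_singleton] at hz
    rcases hz with rfl | rfl <;> simp [*]
  have hc2 : ({x, y} : Finset W).card = 2 := Finset.card_pair hxy
  obtain ⟨s, g, hsg, hI, hC, hs, hg⟩ := per_inter hk33 h1 h2 hne
    (by rw [← hc2]; exact Finset.card_le_card hsub)
  have heq : ({x, y} : Finset W) = {s, g} := by
    rw [hI] at hsub
    exact Finset.eq_of_subset_of_card_le hsub (by rw [hc2]; exact Finset.card_le_two)
  have hz : ∀ z, z ∈ J1 → z ∈ J2 → z = x ∨ z = y := by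
    intro z hz1 hz2
    have : z ∈ ({x, y} : Finset W) := by rw [heq, ← hI]; simp [hz1, hz2]
    simpa using this
  have hd : J1 \ J2 = J1 \ {x, y} := by
    ext z
    simp only [Finset.mem_sdiff, Finset.mem_insert, Finset.mem_singleton]
    refine and_congr_right fun hz1 => not_congr ⟨hz z hz1, ?_⟩
    rintro (rfl | rfl) <;> assumption
  rw [hd] at hC hs hg
  have hxs : x ∈ ({s, g} : Finset W) := by rw [← heq]; simp
  have hys : y ∈ ({s, g} : Finset W) := by rw [← heq]; simp
  simp only [Finset.mem_insert, Finset.mem_singleton] at hxs hys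
  refine ⟨hz, hC, ?_, ?_⟩
  · rcases hxs with h | h
    · exact Eq.subst (motive := fun t => Touch H {t} (J1 \ {x, y})) h.symm hs
    · exact Eq.subst (motive := fun t => Touch H {t} (J1 \ {x, y})) h.symm hg
  · rcases hys with h | h
    · exact Eq.subst (motive := fun t => Touch H {t} (J1 \ {x, y})) h.symm hs
    · exact Eq.subst (motive := fun t => Touch H {t} (J1 \ {x, y})) h.symm hg

theorem three_cycles {W : Type*} [Fintype W] {H : SimpleGraph W}
    (hk33 : ¬ HasMinor H (completeBipartiteGraph (Fin 3) (Fin 3)))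
    (hk5 : ¬ HasMinor H (completeGraph (Fin 5)))
    {x y : W} {J1 J2 J3 : Finset W} (hxy : H.Adj x y) (h1 : IsPer H J1) (h2 : IsPer H J2)
    (h3 : IsPer H J3) (h12 : J1 ≠ J2) (h13 : J1 ≠ J3) (h23 : J2 ≠ J3)
    (hx1 : x ∈ J1) (hx2 : x ∈ J2) (hx3 : x ∈ J3) (hy1 : y ∈ J1) (hy2 : y ∈ J2) (hy3 : y ∈ J3) :
    False := by
  obtain ⟨i12, c1, tx1, ty1⟩ := per_pair hk33 hxy.ne h1 h2 h12 hx1 hx2 hy1 hy2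
  obtain ⟨i23, c2, tx2, ty2⟩ := per_pair hk33 hxy.ne h2 h3 h23 hx2 hx3 hy2 hy3
  obtain ⟨i31, c3, tx3, ty3⟩ := per_pair hk33 hxy.ne h3 h1 h13.symm hx3 hx1 hy3 hy1
  have hins : ∀ J : Finset W, x ∈ J → y ∈ J → insert x (insert y (J \ {x, y})) = J := by
    intro J hx hy
    ext z
    simp only [Finset.mem_insert, Finset.mem_sdiff, Finset.mem_singleton]
    constructor
    · rintro (rfl | rfl | h)
      · exact hx
      · exact hy
      · exact h.1
    · intro h; tauto
  have hdis : ∀ J J' : Finset W, (∀ z, z ∈ J → z ∈ J' → z = x ∨ z = y) →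
      Disjoint (J \ {x, y}) (J' \ {x, y}) := by
    intro J J' h
    rw [Finset.disjoint_left]
    intro z hz hz'
    simp only [Finset.mem_insert, Finset.mem_sdiff, Finset.mem_singleton] at hz hz'
    exact hz.2 (h z hz.1 hz'.1)
  exact theta_core hk33 hk5 hxy c1 c2 c3 (hdis _ _ i12) (hdis _ _ i31).symm (hdis _ _ i23)
    (by simp) (by simp) (by simp) (by simp) (by simp) (by simp) tx1 ty1 tx2 ty2 tx3 ty3
    (by rw [hins J1 hx1 hy1]; exact h1.2.2.1) (by rw [hins J2 hx2 hy2]; exact h2.2.2.1)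
    (by rw [hins J3 hx3 hy3]; exact h3.2.2.1)


theorem IsPer.card_eJ {W : Type*} [Fintype W] {H : SimpleGraph W} {J : Finset W}
    (h : IsPer H J) : (eJ H J).card = J.card := by
  have h1 := handshake H J
  rw [Finset.sum_congr rfl h.2.1, Finset.sum_const, smul_eq_mul] at h1
  omega

theorem nb_sub_erase {W : Type*} {H : SimpleGraph W} {J : Finset W} (a : W) :
    nb H J a ⊆ J.erase a := by
  intro z hz
  rw [mem_nb] at hz
  exact Finset.mem_erase.2 ⟨hz.2.ne.symm, hz.1⟩

theorem IsPer.three_le {W : Type*} [Fintype W] {H : SimpleGraph W} {J : Finset W}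
    (h : IsPer H J) : 3 ≤ J.card := by
  obtain ⟨a, ha⟩ := h.1.1
  have h1 := Finset.card_le_card (nb_sub_erase (H := H) (J := J) a)
  rw [h.2.1 a ha, Finset.card_erase_of_mem ha] at h1
  omega

theorem IsPer.tri {W : Type*} [Fintype W] {H : SimpleGraph W} {J : Finset W}
    (h : IsPer H J) (hc : J.card = 3) {a b : W} (ha : a ∈ J) (hb : b ∈ J) (hab : a ≠ b) :
    H.Adj a b := by
  have h1 : nb H J a = J.erase a := by
    apply Finset.eq_of_subset_of_card_le (nb_sub_erase a)
    rw [h.2.1 a ha, Finset.card_erase_of_mem ha]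
    omega
  have : b ∈ nb H J a := by rw [h1]; exact Finset.mem_erase.2 ⟨hab.symm, hb⟩
  exact (mem_nb.1 this).2

theorem third {W : Type*} {J : Finset W} (hc : J.card = 3) {a b : W} (ha : a ∈ J) (hb : b ∈ J)
    (hab : a ≠ b) : ∃ c, c ≠ a ∧ c ≠ b ∧ J = {a, b, c} := by
  have h1 : ((J.erase a).erase b).card = 1 := by
    rw [Finset.card_erase_of_mem (Finset.mem_erase.2 ⟨hab.symm, hb⟩), Finset.card_erase_of_mem ha]
    omega
  obtain ⟨c, hc'⟩ := Finset.card_eq_one.1 h1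
  have hcm : c ∈ (J.erase a).erase b := by rw [hc']; simp
  simp only [Finset.mem_erase] at hcm
  refine ⟨c, hcm.2.1, hcm.1, ?_⟩
  have h2 : (J.erase a) = insert b {c} := by
    rw [← hc', Finset.insert_erase (Finset.mem_erase.2 ⟨hab.symm, hb⟩)]
  rw [← h2, Finset.insert_erase ha]

theorem counting {W : Type*} [Fintype W] [Nonempty W] {H : SimpleGraph W}
    (h3 : ∀ X : Finset W, X.card ≤ 2 → Cn H Xᶜ)
    (hk33 : ¬ HasMinor H (completeBipartiteGraph (Fin 3) (Fin 3)))
    (hk5 : ¬ HasMinor H (completeGraph (Fin 5)))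
    (S : Finset W) (hd4 : ∀ x, 4 ≤ (nb H Finset.univ x).card)
    (hd5 : ∀ x, x ∉ S → 5 ≤ (nb H Finset.univ x).card)
    (htS : ∀ a b c, H.Adj a b → H.Adj a c → H.Adj b c → a ∈ S → b ∉ S)
    (huniq : ∀ a b c d, H.Adj a b → H.Adj a c → H.Adj b c → H.Adj a d → H.Adj b d → c = d) :
    False := by
  have hrank := rank_bound h3 (fun x => by have := hd4 x; omega)
  have hP : ∀ J, J ∈ Per H ↔ IsPer H J := by intro J; simp [Per]
  -- every edge lies in at most two peripheral cycles
  have hsum : ∑ J ∈ Per H, J.card ≤ 2 * H.edgeFinset.card := by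
    have e1 : ∑ J ∈ Per H, J.card = ∑ J ∈ Per H, (H.edgeFinset.filter (fun e => e ∈ eJ H J)).card := by
      apply Finset.sum_congr rfl
      intro J hJ
      rw [← ((hP J).1 hJ).card_eJ]
      congr 1
      ext e
      simp only [eJ, Finset.mem_filter]
      tauto
    have e2 := Finset.sum_card_bipartiteAbove_eq_sum_card_bipartiteBelow (s := Per H)
      (t := H.edgeFinset) (fun J e => e ∈ eJ H J)
    simp only [Finset.bipartiteAbove, Finset.bipartiteBelow] at e2
    rw [e1, e2, mul_comm, ← smul_eq_mul]
    apply Finset.sum_le_card_nsmul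
    intro e he
    by_contra hlt
    push Not at hlt
    obtain ⟨J1, J2, J3, m1, m2, m3, n12, n13, n23⟩ := Finset.two_lt_card_iff.1 hlt
    rw [Finset.mem_filter] at m1 m2 m3
    induction e using Sym2.ind with
    | _ x y =>
      rw [mem_eJ] at m1 m2 m3
      exact three_cycles hk33 hk5 m1.2.1 ((hP _).1 m1.1) ((hP _).1 m2.1) ((hP _).1 m3.1) n12 n13 n23
        m1.2.2.1 m2.2.2.1 m3.2.2.1 m1.2.2.2 m2.2.2.2 m3.2.2.2
  set T := (Per H).filter (fun J => J.card = 3) with hT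
  have h4 : 4 * (Per H).card ≤ ∑ J ∈ Per H, J.card + T.card := by
    rw [hT, Finset.card_filter, ← Finset.sum_add_distrib, mul_comm, ← smul_eq_mul]
    apply Finset.card_nsmul_le_sum
    intro J hJ
    have := ((hP J).1 hJ).three_le
    split_ifs <;> omega
  -- triangles at a vertex
  have ht : ∀ x, 2 * (T.filter (fun J => x ∈ J)).card ≤ (nb H Finset.univ x).card := by
    intro x
    have hdis : ∀ J ∈ T.filter (fun J => x ∈ J), ∀ J' ∈ T.filter (fun J => x ∈ J), J ≠ J' →
        Disjoint (J.erase x) (J'.erase x) := by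
      intro J hJ J' hJ' hne
      rw [Finset.disjoint_left]
      intro z hz hz'
      simp only [hT, Finset.mem_filter, hP] at hJ hJ'
      rw [Finset.mem_erase] at hz hz'
      obtain ⟨⟨p1, c1⟩, x1⟩ := hJ
      obtain ⟨⟨p2, c2⟩, x2⟩ := hJ'
      obtain ⟨c, hcx, hcz, hJ⟩ := third c1 x1 hz.2 hz.1.symm
      obtain ⟨d, hdx, hdz, hJ'⟩ := third c2 x2 hz'.2 hz.1.symm
      have mc : c ∈ J := by rw [hJ]; simp
      have md : d ∈ J' := by rw [hJ']; simp
      have : c = d := huniq x z c d (p1.tri c1 x1 hz.2 hz.1.symm) (p1.tri c1 x1 mc hcx.symm)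
        (p1.tri c1 hz.2 mc hcz.symm) (p2.tri c2 x2 md hdx.symm) (p2.tri c2 hz'.2 md hdz.symm)
      subst this
      exact hne (hJ.trans hJ'.symm)
    have hb := Finset.card_biUnion hdis
    have hb2 : ∑ J ∈ T.filter (fun J => x ∈ J), (J.erase x).card =
        ∑ J ∈ T.filter (fun J => x ∈ J), 2 := by
      apply Finset.sum_congr rfl
      intro J hJ
      simp only [hT, Finset.mem_filter] at hJ
      rw [Finset.card_erase_of_mem hJ.2, hJ.1.2]
    rw [hb2, Finset.sum_const, smul_eq_mul] at hb
    rw [mul_comm, ← hb]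
    apply Finset.card_le_card
    intro z hz
    rw [Finset.mem_biUnion] at hz
    obtain ⟨J, hJ, hz⟩ := hz
    simp only [hT, Finset.mem_filter, hP] at hJ
    rw [Finset.mem_erase] at hz
    exact mem_nb.2 ⟨Finset.mem_univ _, hJ.1.1.tri hJ.1.2 hJ.2 hz.2 hz.1.symm⟩
  have hcnt : 2 * T.card ≤ ∑ x ∈ Sᶜ, (T.filter (fun J => x ∈ J)).card := by
    have e2 := Finset.sum_card_bipartiteAbove_eq_sum_card_bipartiteBelow (s := T)
      (t := Sᶜ) (fun J x => x ∈ J)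
    simp only [Finset.bipartiteAbove, Finset.bipartiteBelow] at e2
    rw [← e2, mul_comm, ← smul_eq_mul]
    apply Finset.card_nsmul_le_sum
    intro J hJ
    simp only [hT, Finset.mem_filter, hP] at hJ
    have hle : (J ∩ S).card ≤ 1 := by
      rw [Finset.card_le_one]
      intro a ha b hb
      rw [Finset.mem_inter] at ha hb
      by_contra hab
      obtain ⟨c, hca, hcb, hJe⟩ := third hJ.2 ha.1 hb.1 hab
      have mc : c ∈ J := by rw [hJe]; simp
      exact htS a b c (hJ.1.tri hJ.2 ha.1 hb.1 hab) (hJ.1.tri hJ.2 ha.1 mc hca.symm)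
        (hJ.1.tri hJ.2 hb.1 mc hcb.symm) ha.2 hb.2
    have hsp := Finset.card_inter_add_card_sdiff J S
    have heq : Sᶜ.filter (fun x => x ∈ J) = J \ S := by
      ext z; simp only [Finset.mem_filter, Finset.mem_compl, Finset.mem_sdiff]; tauto
    rw [heq]
    omega
  have hhs := handshake H Finset.univ
  have heU : eJ H Finset.univ = H.edgeFinset := by
    ext e; simp [eJ]
  rw [heU] at hhs
  have hfin : ∑ x ∈ Sᶜ, (T.filter (fun J => x ∈ J)).card + 8 * Fintype.card W ≤
      ∑ x : W, 2 * (nb H Finset.univ x).card := by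
    have e1 : ∑ x ∈ Sᶜ, (T.filter (fun J => x ∈ J)).card =
        ∑ x : W, if x ∈ Sᶜ then (T.filter (fun J => x ∈ J)).card else 0 := by
      rw [← Finset.sum_filter]
      congr 1
      ext z; simp
    have e2 : 8 * Fintype.card W = ∑ x : W, 8 := by simp [mul_comm]
    rw [e1, e2, ← Finset.sum_add_distrib]
    apply Finset.sum_le_sum
    intro x _
    have a1 := hd4 x
    have a2 := ht x
    split_ifs with hx
    · have a3 := hd5 x (Finset.mem_compl.1 hx)
      omega
    · omega
  rw [← Finset.mul_sum, hhs] at hfin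
  omega


theorem cn_of_conn {V : Type*} [Fintype V] {G : SimpleGraph V}
    (h5 : ∀ S : Set V, S.Finite → S.ncard < 5 → (G.induce Sᶜ).Connected)
    (X : Finset V) (hX : X.card < 5) : Cn G Xᶜ := by
  apply Cn.of_connected
  rw [Finset.coe_compl]
  exact h5 _ X.finite_toSet (by rwa [Set.ncard_coe_finset])

theorem five_le {V : Type*} [Fintype V] {G : SimpleGraph V} (hV : 5 < Fintype.card V)
    (h5 : ∀ X : Finset V, X.card < 5 → Cn G Xᶜ) (x : V) : 5 ≤ (nb G Finset.univ x).card := by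
  by_contra hlt
  push Not at hlt
  have hc := h5 _ hlt
  have hx : x ∈ (nb G Finset.univ x)ᶜ := by
    rw [Finset.mem_compl, mem_nb]
    exact fun h => G.irrefl h.2
  obtain ⟨a, ha, y, hy, -, hay⟩ := hc.2 {x} (by simpa using hx) ⟨x, by simp⟩ (by
    intro h
    have h2 := Finset.card_compl_add_card (nb G Finset.univ x)
    rw [← h, Finset.card_singleton] at h2
    omega)
  rw [Finset.mem_singleton] at ha
  subst ha
  rw [Finset.mem_compl, mem_nb] at hy
  exact hy ⟨Finset.mem_univ _, hay⟩

theorem cn_induce {V : Type*} [Fintype V] {G : SimpleGraph V} {v : V}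
    (X : Finset ({v}ᶜ : Set V)) (h : Cn G (insert v (X.image Subtype.val))ᶜ) :
    Cn (G.induce ({v}ᶜ : Set V)) Xᶜ := by
  have hmem : ∀ z : ({v}ᶜ : Set V), z.1 ∈ (insert v (X.image Subtype.val))ᶜ ↔ z ∈ Xᶜ := by
    intro z
    have hz : z.1 ≠ v := z.2
    simp [hz]
  have hlift : ∀ z : V, z ∈ (insert v (X.image Subtype.val))ᶜ → z ∈ ({v}ᶜ : Set V) := by
    intro z hz hzv
    rw [Set.mem_singleton_iff] at hzv
    simp [hzv] at hz
  constructor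
  · obtain ⟨z, hz⟩ := h.1
    exact ⟨⟨z, hlift z hz⟩, (hmem ⟨z, hlift z hz⟩).1 hz⟩
  · intro Y hY hYne hYX
    obtain ⟨x, hx, y, hy, hyY, hxy⟩ := h.2 (Y.image Subtype.val) (by
        intro z hz
        obtain ⟨w, hw, rfl⟩ := Finset.mem_image.1 hz
        exact (hmem w).2 (hY hw)) (hYne.image _) (by
        intro heq
        apply hYX
        apply Finset.Subset.antisymm hY
        intro w hw
        have := (hmem w).2 hw
        rw [← heq] at this
        obtain ⟨w', hw', he⟩ := Finset.mem_image.1 this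
        rwa [← Subtype.ext he])
    obtain ⟨x', hx', rfl⟩ := Finset.mem_image.1 hx
    exact ⟨x', hx', ⟨y, hlift y hy⟩, (hmem ⟨y, hlift y hy⟩).1 hy,
      fun hc => hyY (Finset.mem_image.2 ⟨_, hc, rfl⟩), hxy⟩

theorem nb_induce {V : Type*} [Fintype V] {G : SimpleGraph V} {v : V} (x : ({v}ᶜ : Set V)) :
    (nb (G.induce ({v}ᶜ : Set V)) Finset.univ x).card = ((nb G Finset.univ x.1).erase v).card := by
  rw [← Finset.card_image_of_injective _ Subtype.val_injective]
  congr 1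
  ext z
  simp only [Finset.mem_image, mem_nb, Finset.mem_erase, Finset.mem_univ, true_and]
  constructor
  · rintro ⟨w, hw, rfl⟩
    exact ⟨w.2, hw⟩
  · rintro ⟨h1, h2⟩
    exact ⟨⟨z, h1⟩, h2, rfl⟩

theorem main {V : Type*} [Fintype V] (G : SimpleGraph V) (hV : 5 < Fintype.card V)
    (h5 : ∀ S : Set V, S.Finite → S.ncard < 5 → (G.induce Sᶜ).Connected) (v : V)
    (hk5 : ¬ HasMinor (G.induce ({v}ᶜ : Set V)) (completeGraph (Fin 5)))
    (hk33 : ¬ HasMinor (G.induce ({v}ᶜ : Set V)) (completeBipartiteGraph (Fin 3) (Fin 3)))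
    (hno : ∀ a b c d, G.Adj a b → G.Adj a c → G.Adj b c → G.Adj a d → G.Adj b d → c = d) :
    False := by
  have hcn := cn_of_conn h5
  have hdeg := five_le hV hcn
  have hne : Nonempty ({v}ᶜ : Set V) := by
    have : 0 < (nb G Finset.univ v).card := by have := hdeg v; omega
    obtain ⟨z, hz⟩ := Finset.card_pos.1 this
    exact ⟨⟨z, (mem_nb.1 hz).2.ne.symm⟩⟩
  refine counting (H := G.induce ({v}ᶜ : Set V)) ?_ hk33 hk5
    (Finset.univ.filter (fun x => G.Adj v x.1)) ?_ ?_ ?_ ?_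
  · intro X hX
    suffices hc : Cn G (insert v (X.image Subtype.val))ᶜ by
      convert cn_induce X hc
    apply hcn
    have := Finset.card_insert_le v (X.image Subtype.val)
    have := Finset.card_image_le (s := X) (f := Subtype.val)
    omega
  · intro x
    rw [nb_induce]
    have := Finset.pred_card_le_card_erase (s := nb G Finset.univ x.1) (a := v)
    have := hdeg x.1
    omega
  · intro x hx
    rw [nb_induce, Finset.erase_eq_of_notMem]
    · exact hdeg x.1
    · intro h
      exact hx (by simpa using (mem_nb.1 h).2.symm)
  · intro a b c hab hac hbc ha hb
    simp only [Finset.mem_filter, Finset.mem_univ, true_and] at ha hb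
    exact c.2 (hno a.1 b.1 c.1 v hab hac hbc ha.symm hb.symm)
  · intro a b c d h1 h2 h3 h4 h5
    exact Subtype.ext (hno a.1 b.1 c.1 d.1 h1 h2 h3 h4 h5)

end ApexAux

/-- A 5-connected nonplanar apex graph with an apex vertex lying
in a 5-element vertex cut contains a subdivision of `K₅` or `K₄⁻`. -/
theorem stmt15 {V : Type*} [Fintype V] (G : SimpleGraph V)
    (h5 : IsKConnected 5 G) (hnp : ¬ IsPlanar G)
    (v : V) (hv : IsPlanar (G.induce ({v}ᶜ : Set V)))
    (D : Finset V) (hD : D.card = 5) (hvD : v ∈ D)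
    (hcut : ¬ (G.induce ((↑D : Set V)ᶜ)).Connected) :
    containsK5Subdivision G ∨ containsK4minus G := by
  by_contra hcon
  push Not at hcon
  refine ApexAux.main G (by simpa [Set.ncard_univ, Nat.card_eq_fintype_card] using h5.1) h5.2 v
    hv.1 hv.2 ?_
  intro a b c d hab hac hbc had hbd
  by_contra hcd
  exact hcon.2 ⟨a, b, c, d, hab.ne, hac.ne, had.ne, hbc.ne, hbd.ne, hcd, hab, hac, had, hbc, hbd⟩
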